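/- arXiv:2410.19270 — 5 statements merged into one kernel-verified Lean document; each statement's English description precedes it below -/
import Mathlib

section
/- Let H be a complex separable infinite-dimensional Hilbert space and let N ⊆ T(H) be a linear subspace of trace-zero trace-class operators that is self-adjoint (X ∈ N implies X* ∈ N) and closed in the trace norm. Then there exists a strongly entanglement breaking quantum channel Φ: T(H) → T(H) such that null(Φ) = N, where null(Φ) := {X ∈ T(H) : Φ(X) = 0}. -/
noncomputable section

open scoped ComplexInnerProductSpace
open ContinuousLinearMap Filter Topology

/-- The rank-one operator `u v*`, i.e. `x ↦ ⟪v, x⟫ • u`. -/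
def rankOne {H K : Type*} [NormedAddCommGroup H] [InnerProductSpace ℂ H]
    [NormedAddCommGroup K] [InnerProductSpace ℂ K] (u : K) (v : H) : H →L[ℂ] K :=
  (ContinuousLinearMap.toSpanSingleton ℂ u).comp (innerSL ℂ v)

/-- An operator is trace class iff the sums `∑ |⟪f i, T (e i)⟫|` over finite orthonormal
families are uniformly bounded (the supremum being the trace norm). -/
def IsTraceClass {H K : Type*} [NormedAddCommGroup H] [InnerProductSpace ℂ H]
    [NormedAddCommGroup K] [InnerProductSpace ℂ K] (T : H →L[ℂ] K) : Prop :=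
  ∃ C : ℝ, ∀ (n : ℕ) (e : Fin n → H) (f : Fin n → K),
    Orthonormal ℂ e → Orthonormal ℂ f → (∑ i, ‖⟪f i, T (e i)⟫‖) ≤ C

/-- The trace norm of an operator. -/
def traceNorm {H K : Type*} [NormedAddCommGroup H] [InnerProductSpace ℂ H]
    [NormedAddCommGroup K] [InnerProductSpace ℂ K] (T : H →L[ℂ] K) : ℝ :=
  sSup { r : ℝ | ∃ (n : ℕ) (e : Fin n → H) (f : Fin n → K),
    Orthonormal ℂ e ∧ Orthonormal ℂ f ∧ r = ∑ i, ‖⟪f i, T (e i)⟫‖ }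

/-- A fixed Hilbert basis of a Hilbert space. -/
def stdONB (H : Type*) [NormedAddCommGroup H] [InnerProductSpace ℂ H] [CompleteSpace H] :
    HilbertBasis (exists_hilbertBasis ℂ H).choose ℂ H :=
  (exists_hilbertBasis ℂ H).choose_spec.choose

/-- The trace of a (trace-class) operator. -/
def Tr {H : Type*} [NormedAddCommGroup H] [InnerProductSpace ℂ H] [CompleteSpace H]
    (T : H →L[ℂ] H) : ℂ :=
  ∑' i, ⟪stdONB H i, T (stdONB H i)⟫

/-- Convergence of a series of operators in trace norm. -/
def HasSumTN {H K : Type*} [NormedAddCommGroup H] [InnerProductSpace ℂ H]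
    [NormedAddCommGroup K] [InnerProductSpace ℂ K] {ι : Type*}
    (f : ι → (H →L[ℂ] K)) (T : H →L[ℂ] K) : Prop :=
  Filter.Tendsto (fun s : Finset ι => traceNorm (T - ∑ k ∈ s, f k)) Filter.atTop (nhds 0)

/-- A state: a positive trace-class operator with trace one. -/
def IsState {H : Type*} [NormedAddCommGroup H] [InnerProductSpace ℂ H] [CompleteSpace H]
    (ρ : H →L[ℂ] H) : Prop :=
  IsTraceClass ρ ∧ ρ.IsPositive ∧ Tr ρ = 1

/-- Positivity of a finite matrix of operators, viewed as a block operator. -/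
def MatPos {H : Type*} [NormedAddCommGroup H] [InnerProductSpace ℂ H] {n : ℕ}
    (M : Fin n → Fin n → (H →L[ℂ] H)) : Prop :=
  ∀ x : Fin n → H,
    0 ≤ (∑ i, ∑ j, ⟪x i, M i j (x j)⟫).re ∧ (∑ i, ∑ j, ⟪x i, M i j (x j)⟫).im = 0

/-- Complete positivity of a linear map on trace-class operators. -/
def IsCompletelyPositive {H K : Type*} [NormedAddCommGroup H] [InnerProductSpace ℂ H]
    [NormedAddCommGroup K] [InnerProductSpace ℂ K]
    (Φ : (H →L[ℂ] H) →ₗ[ℂ] (K →L[ℂ] K)) : Prop :=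
  ∀ (n : ℕ) (M : Fin n → Fin n → (H →L[ℂ] H)),
    (∀ i j, IsTraceClass (M i j)) → MatPos M → MatPos fun i j => Φ (M i j)

/-- A quantum channel: a completely positive trace-preserving linear map on
trace-class operators. -/
structure IsChannel {H K : Type*} [NormedAddCommGroup H] [InnerProductSpace ℂ H]
    [CompleteSpace H] [NormedAddCommGroup K] [InnerProductSpace ℂ K] [CompleteSpace K]
    (Φ : (H →L[ℂ] H) →ₗ[ℂ] (K →L[ℂ] K)) : Prop where
  maps_traceClass : ∀ X : H →L[ℂ] H, IsTraceClass X → IsTraceClass (Φ X)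
  completelyPositive : IsCompletelyPositive Φ
  tracePreserving : ∀ X : H →L[ℂ] H, IsTraceClass X → Tr (Φ X) = Tr X

/-- Strongly entanglement breaking channel: admits a Holevo (measure-and-prepare) form
`Φ(X) = ∑ₖ Tr(Fₖ X) Rₖ` with states `Rₖ` and positive `Fₖ` with `∑ₖ Fₖ = I` (SOT). -/
def IsSEB {H K : Type*} [NormedAddCommGroup H] [InnerProductSpace ℂ H] [CompleteSpace H]
    [NormedAddCommGroup K] [InnerProductSpace ℂ K] [CompleteSpace K]
    (Φ : (H →L[ℂ] H) →ₗ[ℂ] (K →L[ℂ] K)) : Prop :=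
  ∃ (R : ℕ → (K →L[ℂ] K)) (F : ℕ → (H →L[ℂ] H)),
    (∀ k, IsState (R k)) ∧ (∀ k, (F k).IsPositive) ∧
    (∀ x : H, HasSum (fun k => F k x) x) ∧
    ∀ X : H →L[ℂ] H, IsTraceClass X → HasSumTN (fun k => Tr (F k * X) • R k) (Φ X)

/-- The weak* topology on `B(H)`, induced by the pairing with trace-class operators. -/
def weakStarTopology (H : Type*) [NormedAddCommGroup H] [InnerProductSpace ℂ H]
    [CompleteSpace H] : TopologicalSpace (H →L[ℂ] H) :=
  TopologicalSpace.induced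
    (fun Y => fun X : { X : H →L[ℂ] H // IsTraceClass X } => Tr ((X : H →L[ℂ] H) * Y))
    inferInstance



/-!
The Banach space `T(H)` is separable and its dual is `B(H)`, so a closed subspace `N` is the common
kernel of countably many functionals `X ↦ Tr (Aₖ X)`. As `N` is self-adjoint, the real and imaginary
parts of the `Aₖ` vanish on `N` too, so the `Aₖ` may be taken self-adjoint. As `Tr` vanishes on `N`,
they may be shifted by multiples of the identity and rescaled: small positive multiples of
`Aₖ + ‖Aₖ‖ I`, completed by the remainder of the identity, are the effects `Fₖ` of a measurement,
and `Tr (Fₖ X) = 0` for all `k` iff `Tr X = 0` and `Tr (Aₖ X) = 0` for all `k`, that is, `X ∈ N`.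
The channel measures `F` and upon the outcome `k` prepares the `k`-th vector of an orthonormal
sequence; the diagonal matrix entries of its output are exactly the `Tr (Fₖ X)`.

The dual of `T(H)` is `B(H)` because operators of finite rank are dense in `T(H)`: off the span of
finite orthonormal families which almost attain the trace norm of `X`, little trace norm is left.
-/

section TraceNormBound

variable {H K : Type*} [NormedAddCommGroup H] [InnerProductSpace ℂ H]
  [NormedAddCommGroup K] [InnerProductSpace ℂ K]

/-- `C` is an upper bound for the trace norm of `T`. Unlike an inequality `traceNorm T ≤ C`, this
entails that `T` is trace class, the `sSup` defining `traceNorm` being `0` otherwise. -/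
def TraceNormLE (T : H →L[ℂ] K) (C : ℝ) : Prop :=
  ∀ (n : ℕ) (e : Fin n → H) (f : Fin n → K),
    Orthonormal ℂ e → Orthonormal ℂ f → ∑ i, ‖⟪f i, T (e i)⟫‖ ≤ C

lemma traceNorm_nonneg (T : H →L[ℂ] K) : 0 ≤ traceNorm T := by
  refine Real.sSup_nonneg ?_
  rintro r ⟨n, e, f, -, -, rfl⟩
  positivity

lemma exists_lt_sum_norm_inner (T : H →L[ℂ] K) {ε : ℝ} (hε : 0 < ε) :
    ∃ (n : ℕ) (e : Fin n → H) (f : Fin n → K), Orthonormal ℂ e ∧ Orthonormal ℂ f ∧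
      traceNorm T - ε < ∑ i, ‖⟪f i, T (e i)⟫‖ := by
  have hne : {r : ℝ | ∃ (n : ℕ) (e : Fin n → H) (f : Fin n → K),
      Orthonormal ℂ e ∧ Orthonormal ℂ f ∧ r = ∑ i, ‖⟪f i, T (e i)⟫‖}.Nonempty :=
    ⟨_, 0, Fin.elim0, Fin.elim0, .of_isEmpty _, .of_isEmpty _, rfl⟩
  obtain ⟨_, ⟨n, e, f, he, hf, rfl⟩, hlt⟩ :=
    exists_lt_of_lt_csSup hne (sub_lt_self (traceNorm T) hε)
  exact ⟨n, e, f, he, hf, hlt⟩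

lemma IsTraceClass.traceNormLE {T : H →L[ℂ] K} (hT : IsTraceClass T) :
    TraceNormLE T (traceNorm T) := by
  obtain ⟨C, hC⟩ := hT
  intro n e f he hf
  refine le_csSup ⟨C, ?_⟩ ⟨n, e, f, he, hf, rfl⟩
  rintro r ⟨n, e, f, he, hf, rfl⟩
  exact hC n e f he hf

namespace TraceNormLE

variable {S T : H →L[ℂ] K} {C D : ℝ}

lemma isTraceClass (hT : TraceNormLE T C) : IsTraceClass T := ⟨C, hT⟩

lemma nonneg (hT : TraceNormLE T C) : 0 ≤ C := by
  simpa using hT 0 Fin.elim0 Fin.elim0 (.of_isEmpty _) (.of_isEmpty _)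

lemma traceNorm_le (hT : TraceNormLE T C) : traceNorm T ≤ C := by
  refine Real.sSup_le ?_ hT.nonneg
  rintro r ⟨n, e, f, he, hf, rfl⟩
  exact hT n e f he hf

lemma mono (hT : TraceNormLE T C) (hCD : C ≤ D) : TraceNormLE T D :=
  fun n e f he hf => (hT n e f he hf).trans hCD

lemma zero : TraceNormLE (0 : H →L[ℂ] K) 0 := fun n e f _ _ => by simp

lemma add (hS : TraceNormLE S C) (hT : TraceNormLE T D) : TraceNormLE (S + T) (C + D) := by
  intro n e f he hf
  calc ∑ i, ‖⟪f i, (S + T) (e i)⟫‖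
      ≤ ∑ i, (‖⟪f i, S (e i)⟫‖ + ‖⟪f i, T (e i)⟫‖) := by
        refine Finset.sum_le_sum fun i _ => ?_
        rw [add_apply, inner_add_right]
        exact norm_add_le _ _
    _ ≤ C + D := by
        rw [Finset.sum_add_distrib]
        exact add_le_add (hS n e f he hf) (hT n e f he hf)

lemma smul (hT : TraceNormLE T C) (c : ℂ) : TraceNormLE (c • T) (‖c‖ * C) := by
  intro n e f he hf
  simp only [smul_apply, inner_smul_right, norm_mul, ← Finset.mul_sum]
  exact mul_le_mul_of_nonneg_left (hT n e f he hf) (norm_nonneg c)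

lemma sum {ι : Type*} {T : ι → H →L[ℂ] K} {C : ι → ℝ} (s : Finset ι)
    (hT : ∀ i, TraceNormLE (T i) (C i)) : TraceNormLE (∑ i ∈ s, T i) (∑ i ∈ s, C i) := by
  classical
  induction s using Finset.induction_on with
  | empty => simpa using zero
  | insert i s hi ih =>
    rw [Finset.sum_insert hi, Finset.sum_insert hi]
    exact (hT i).add ih

lemma hasSum {ι : Type*} {T : ι → H →L[ℂ] K} {C : ι → ℝ} {S : H →L[ℂ] K}
    (hT : ∀ i, TraceNormLE (T i) (C i)) (hC : Summable C) (hS : HasSum T S) :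
    TraceNormLE S (∑' i, C i) := by
  intro n e f he hf
  have hcont : Continuous fun R : H →L[ℂ] K => ∑ i, ‖⟪f i, R (e i)⟫‖ := by fun_prop
  refine le_of_tendsto ((hcont.tendsto S).comp hS) (Eventually.of_forall fun s => ?_)
  exact (sum s hT n e f he hf).trans (hC.sum_le_tsum s fun i _ => (hT i).nonneg)

lemma adjoint [CompleteSpace H] [CompleteSpace K] (hT : TraceNormLE T C) :
    TraceNormLE (ContinuousLinearMap.adjoint T) C := by
  intro n e f he hf
  simpa only [adjoint_inner_right, norm_inner_symm] using hT n f e hf he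

lemma opNorm_le (hT : TraceNormLE T C) : ‖T‖ ≤ C := by
  refine opNorm_le_of_re_inner_le hT.nonneg fun x y hx hy => ?_
  refine (RCLike.re_le_norm _).trans ?_
  rw [norm_inner_symm]
  simpa using hT 1 (fun _ => x) (fun _ => y)
    ⟨fun _ => hx, fun i j hij => absurd (Subsingleton.elim i j) hij⟩
    ⟨fun _ => hy, fun i j hij => absurd (Subsingleton.elim i j) hij⟩

lemma unitary_comp [CompleteSpace K] (hT : TraceNormLE T C) (U : unitary (K →L[ℂ] K)) :
    TraceNormLE ((U : K →L[ℂ] K) ∘L T) C := by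
  intro n e f he hf
  have hUf : Orthonormal ℂ fun i => ContinuousLinearMap.adjoint (U : K →L[ℂ] K) (f i) :=
    hf.comp_linearIsometry (Unitary.linearIsometryEquiv (star U)).toLinearIsometry
  simpa only [ContinuousLinearMap.comp_apply, adjoint_inner_left] using hT n e _ he hUf

-- Every operator is a combination of four unitaries, and these preserve the trace norm.
lemma comp_left [CompleteSpace K] (hT : TraceNormLE T C) (A : K →L[ℂ] K) :
    TraceNormLE (A ∘L T) (2 * ‖A‖ * C) := by
  obtain ⟨u, c, hA, hc⟩ := CStarAlgebra.exists_sum_four_unitary A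
  have hAT : A ∘L T = ∑ i, c i • ((u i : K →L[ℂ] K) ∘L T) := by
    conv_lhs => rw [hA]
    ext x
    simp
  rw [hAT]
  refine (sum Finset.univ fun i => (hT.unitary_comp (u i)).smul (c i)).mono ?_
  calc ∑ i, ‖c i‖ * C ≤ ∑ _i : Fin 4, ‖A‖ / 2 * C :=
        Finset.sum_le_sum fun i _ => mul_le_mul_of_nonneg_right (hc i) hT.nonneg
    _ = 2 * ‖A‖ * C := by
        rw [Finset.sum_const, Finset.card_univ, Fintype.card_fin, nsmul_eq_mul]
        ring

lemma comp_right [CompleteSpace H] [CompleteSpace K] (hT : TraceNormLE T C) (A : H →L[ℂ] H) :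
    TraceNormLE (T ∘L A) (2 * ‖A‖ * C) := by
  simpa [adjoint_comp] using (hT.adjoint.comp_left (ContinuousLinearMap.adjoint A)).adjoint

lemma sum_norm_inner_le (hT : TraceNormLE T C) {ι : Type*} [Fintype ι] {e : ι → H} {f : ι → K}
    (he : Orthonormal ℂ e) (hf : Orthonormal ℂ f) : ∑ i, ‖⟪f i, T (e i)⟫‖ ≤ C := by
  let σ := (Fintype.equivFin ι).symm
  rw [← σ.sum_comp]
  exact hT _ _ _ (he.comp σ σ.injective) (hf.comp σ σ.injective)

lemma finset_sum_norm_inner_le {T : H →L[ℂ] H} (hT : TraceNormLE T C) {ι : Type*} {b : ι → H}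
    (hb : Orthonormal ℂ b) (s : Finset ι) : ∑ i ∈ s, ‖⟪b i, T (b i)⟫‖ ≤ C := by
  have hbs : Orthonormal ℂ fun i : s => b i := hb.comp _ Subtype.val_injective
  rw [← Finset.sum_coe_sort s]
  exact hT.sum_norm_inner_le hbs hbs

lemma summable_inner {T : H →L[ℂ] H} (hT : TraceNormLE T C) {ι : Type*} {b : ι → H}
    (hb : Orthonormal ℂ b) : Summable fun i => ⟪b i, T (b i)⟫ :=
  .of_norm (summable_of_sum_le (fun _ => norm_nonneg _) (hT.finset_sum_norm_inner_le hb))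

lemma norm_Tr_le [CompleteSpace H] {T : H →L[ℂ] H} (hT : TraceNormLE T C) : ‖Tr T‖ ≤ C :=
  have hb := (stdONB H).orthonormal
  le_of_tendsto (hT.summable_inner hb).hasSum.norm (Eventually.of_forall fun s =>
    (norm_sum_le s _).trans (hT.finset_sum_norm_inner_le hb s))

end TraceNormLE

lemma traceNormLE_rankOne (u : K) (v : H) :
    TraceNormLE (InnerProductSpace.rankOne ℂ u v) (‖u‖ * ‖v‖) := by
  intro n e f he hf
  calc ∑ i, ‖⟪f i, InnerProductSpace.rankOne ℂ u v (e i)⟫‖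
      = ∑ i, ‖⟪f i, u⟫‖ * ‖⟪e i, v⟫‖ := by
        simp only [InnerProductSpace.rankOne_apply, inner_smul_right, norm_mul,
          norm_inner_symm v, mul_comm]
    _ ≤ √(∑ i, ‖⟪f i, u⟫‖ ^ 2) * √(∑ i, ‖⟪e i, v⟫‖ ^ 2) :=
        Real.sum_mul_le_sqrt_mul_sqrt _ _ _
    _ ≤ ‖u‖ * ‖v‖ := by
        gcongr
        · exact Real.sqrt_le_iff.2 ⟨norm_nonneg u, hf.sum_inner_products_le u⟩
        · exact Real.sqrt_le_iff.2 ⟨norm_nonneg v, he.sum_inner_products_le v⟩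

end TraceNormBound

section TraceClassNorm

variable (H : Type*) [NormedAddCommGroup H] [InnerProductSpace ℂ H]

/-- The trace-class operators as a subspace of `B(H)`. -/
def traceClassSubmodule : Submodule ℂ (H →L[ℂ] H) where
  carrier := {T | IsTraceClass T}
  zero_mem' := TraceNormLE.zero.isTraceClass
  add_mem' hS hT := (hS.traceNormLE.add hT.traceNormLE).isTraceClass
  smul_mem' c _ hT := (hT.traceNormLE.smul c).isTraceClass

/-- The Banach space `T(H)`. It is a type copy of `traceClassSubmodule H`, which already carries
the operator norm, so that it can be given the trace norm instead. -/
def TraceClass : Type _ := traceClassSubmodule H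

namespace TraceClass

instance : AddCommGroup (TraceClass H) := inferInstanceAs (AddCommGroup (traceClassSubmodule H))

instance : Module ℂ (TraceClass H) := inferInstanceAs (Module ℂ (traceClassSubmodule H))

instance : Norm (TraceClass H) := ⟨fun X => traceNorm X.1⟩

variable {H}

lemma traceNormLE_val (X : TraceClass H) : TraceNormLE X.1 ‖X‖ := IsTraceClass.traceNormLE X.2

lemma normedSpaceCore : NormedSpace.Core ℂ (TraceClass H) where
  norm_nonneg X := traceNorm_nonneg X.1
  norm_smul c X := by
    have norm_smul_le (c : ℂ) (X : TraceClass H) : ‖c • X‖ ≤ ‖c‖ * ‖X‖ :=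
      (X.traceNormLE_val.smul c).traceNorm_le
    refine le_antisymm (norm_smul_le c X) ?_
    rcases eq_or_ne c 0 with rfl | hc
    · rw [norm_zero, zero_mul]
      exact traceNorm_nonneg _
    · calc ‖c‖ * ‖X‖ = ‖c‖ * ‖c⁻¹ • c • X‖ := by rw [inv_smul_smul₀ hc]
        _ ≤ ‖c‖ * (‖c⁻¹‖ * ‖c • X‖) := by gcongr; exact norm_smul_le _ _
        _ = ‖c • X‖ := by rw [norm_inv, mul_inv_cancel_left₀ (norm_ne_zero_iff.2 hc)]
  norm_triangle X Y := (X.traceNormLE_val.add Y.traceNormLE_val).traceNorm_le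
  norm_eq_zero_iff X := by
    refine ⟨fun hX => Subtype.ext (norm_le_zero_iff.1 (hX ▸ X.traceNormLE_val.opNorm_le)), ?_⟩
    rintro rfl
    exact le_antisymm TraceNormLE.zero.traceNorm_le (traceNorm_nonneg _)

instance : NormedAddCommGroup (TraceClass H) := .ofCore normedSpaceCore

instance : NormedSpace ℂ (TraceClass H) := .ofCore normedSpaceCore

/-- The contractive inclusion of `T(H)` in `B(H)`. -/
def toCLM : TraceClass H →L[ℂ] (H →L[ℂ] H) :=
  LinearMap.mkContinuous (traceClassSubmodule H).subtype 1 fun X => by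
    rw [one_mul]
    exact X.traceNormLE_val.opNorm_le

/-- A trace-class operator as an element of `T(H)`. -/
def mk (T : H →L[ℂ] H) (hT : IsTraceClass T) : TraceClass H := ⟨T, hT⟩

@[simp] lemma toCLM_mk (T : H →L[ℂ] H) (hT : IsTraceClass T) : toCLM (mk T hT) = T := rfl

@[ext] lemma ext {X Y : TraceClass H} (h : toCLM X = toCLM Y) : X = Y := Subtype.ext h

lemma isTraceClass (X : TraceClass H) : IsTraceClass (toCLM X) := X.2

lemma traceNorm_toCLM (X : TraceClass H) : traceNorm (toCLM X) = ‖X‖ := rfl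

lemma traceNormLE (X : TraceClass H) : TraceNormLE (toCLM X) ‖X‖ := X.traceNormLE_val

lemma norm_mk_le {T : H →L[ℂ] H} {C : ℝ} (hT : TraceNormLE T C) : ‖mk T hT.isTraceClass‖ ≤ C :=
  hT.traceNorm_le

lemma hasSumTN_toCLM {ι : Type*} {u : ι → TraceClass H} {X : TraceClass H} (hu : HasSum u X) :
    HasSumTN (fun i => toCLM (u i)) (toCLM X) := by
  rw [HasSum, SummationFilter.unconditional_filter, tendsto_iff_norm_sub_tendsto_zero] at hu
  refine hu.congr fun s => ?_
  rw [norm_sub_rev, ← traceNorm_toCLM, map_sub, map_sum]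

lemma hasSum_of_summable_norm {ι : Type*} {u : ι → TraceClass H} {X : TraceClass H}
    (hu : Summable fun i => ‖u i‖) (hX : HasSum (fun i => toCLM (u i)) (toCLM X)) :
    HasSum u X := by
  rw [HasSum, SummationFilter.unconditional_filter, tendsto_iff_norm_sub_tendsto_zero]
  refine squeeze_zero (fun s => norm_nonneg _) (fun s => ?_)
    (tendsto_tsum_compl_atTop_zero fun i => ‖u i‖)
  have htail : HasSum (fun i : {i // i ∉ s} => toCLM (u i)) (toCLM (X - ∑ i ∈ s, u i)) := by
    refine (s.hasSum_compl_iff (f := fun i => toCLM (u i))).2 ?_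
    rwa [map_sub, map_sum, sub_add_cancel]
  rw [norm_sub_rev, ← traceNorm_toCLM]
  exact (TraceNormLE.hasSum (fun i : {i // i ∉ s} => (u i).traceNormLE) (hu.subtype _)
    htail).traceNorm_le

variable [CompleteSpace H]

instance : CompleteSpace (TraceClass H) := by
  refine NormedAddCommGroup.completeSpace_of_summable_imp_tendsto fun u hu => ?_
  have hsum : Summable fun n => toCLM (u n) :=
    .of_norm_bounded hu fun n => (u n).traceNormLE.opNorm_le
  have htc := (TraceNormLE.hasSum (fun n => (u n).traceNormLE) hu hsum.hasSum).isTraceClass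
  exact ⟨mk _ htc, (hasSum_of_summable_norm hu hsum.hasSum).tendsto_sum_nat⟩

instance : Star (TraceClass H) :=
  ⟨fun X => mk (star (toCLM X)) X.traceNormLE.adjoint.isTraceClass⟩

@[simp] lemma toCLM_star (X : TraceClass H) : toCLM (star X) = star (toCLM X) := rfl

end TraceClass

end TraceClassNorm

open TraceClass (toCLM)

section Trace

variable {H : Type*} [NormedAddCommGroup H] [InnerProductSpace ℂ H]

/-- Rank-one operators as a bounded sesquilinear map into `T(H)`: `rankOneTC v u` is the operator
`x ↦ ⟪v, x⟫ • u`. The conjugate-linear variable comes first. -/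
def rankOneTC : H →L⋆[ℂ] H →L[ℂ] TraceClass H :=
  LinearMap.mkContinuous₂
    (LinearMap.mk₂'ₛₗ (starRingEnd ℂ) (RingHom.id ℂ)
      (fun v u : H => .mk (InnerProductSpace.rankOne ℂ u v) (traceNormLE_rankOne u v).isTraceClass)
      (fun v w u => by ext x; simp)
      (fun c v u => by ext x; simp)
      (fun v u w => by ext x; simp)
      (fun c v u => by ext x; simp)) 1
    (fun v u => by
      rw [one_mul, mul_comm]
      exact TraceClass.norm_mk_le (traceNormLE_rankOne u v))

@[simp] lemma toCLM_rankOneTC (v u : H) :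
    toCLM (rankOneTC v u) = InnerProductSpace.rankOne ℂ u v := rfl

lemma norm_rankOneTC_le (v u : H) : ‖rankOneTC v u‖ ≤ ‖u‖ * ‖v‖ :=
  (traceNormLE_rankOne u v).traceNorm_le

variable [CompleteSpace H]

/-- The trace as a bounded functional on `T(H)`. -/
def traceL : TraceClass H →L[ℂ] ℂ :=
  LinearMap.mkContinuous
    { toFun := fun X => Tr (toCLM X)
      map_add' := fun X Y => by
        have hb := (stdONB H).orthonormal
        simp only [Tr, map_add, add_apply, inner_add_right]
        exact (X.traceNormLE.summable_inner hb).tsum_add (Y.traceNormLE.summable_inner hb)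
      map_smul' := fun c X => by
        simp only [Tr, map_smul, smul_apply, inner_smul_right, tsum_mul_left, RingHom.id_apply,
          smul_eq_mul] } 1
    fun X => by
      rw [one_mul]
      exact X.traceNormLE.norm_Tr_le

@[simp] lemma traceL_apply (X : TraceClass H) : traceL X = Tr (toCLM X) := rfl

/-- Left multiplication of trace-class operators by bounded operators. -/
def mulLeftTC : (H →L[ℂ] H) →L[ℂ] TraceClass H →L[ℂ] TraceClass H :=
  LinearMap.mkContinuous₂
    (LinearMap.mk₂ ℂ
      (fun A X => .mk (A * toCLM X) (X.traceNormLE.comp_left A).isTraceClass)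
      (fun A B X => by ext x; simp)
      (fun c A X => by ext x; simp)
      (fun A X Y => by ext x; simp)
      (fun c A X => by ext x; simp)) 2
    fun A X => TraceClass.norm_mk_le (X.traceNormLE.comp_left A)

/-- Right multiplication of trace-class operators by a bounded operator. -/
def mulRightTC (A : H →L[ℂ] H) : TraceClass H →L[ℂ] TraceClass H :=
  LinearMap.mkContinuous
    { toFun := fun X => .mk (toCLM X * A) (X.traceNormLE.comp_right A).isTraceClass
      map_add' := fun X Y => by ext x; simp
      map_smul' := fun c X => by ext x; simp } (2 * ‖A‖)
    fun X => TraceClass.norm_mk_le (X.traceNormLE.comp_right A)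

@[simp] lemma toCLM_mulRightTC (A : H →L[ℂ] H) (X : TraceClass H) :
    toCLM (mulRightTC A X) = toCLM X * A := rfl

/-- The duality pairing `⟨A, X⟩ = Tr (A X)` between `B(H)` and `T(H)`. -/
def tracePairing : (H →L[ℂ] H) →L[ℂ] TraceClass H →L[ℂ] ℂ :=
  (compL ℂ (TraceClass H) (TraceClass H) ℂ traceL).comp mulLeftTC

@[simp] lemma tracePairing_apply (A : H →L[ℂ] H) (X : TraceClass H) :
    tracePairing A X = Tr (A * toCLM X) := rfl

lemma Tr_rankOne (u v : H) : Tr (InnerProductSpace.rankOne ℂ u v) = ⟪v, u⟫ := by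
  rw [Tr, ← (stdONB H).tsum_inner_mul_inner]
  exact tsum_congr fun i => by rw [InnerProductSpace.inner_right_rankOne_apply, mul_comm]

lemma Tr_adjoint (T : H →L[ℂ] H) : Tr (adjoint T) = star (Tr T) := by
  rw [Tr, Tr, Complex.star_def, Complex.conj_tsum]
  exact tsum_congr fun i => by rw [adjoint_inner_right, inner_conj_symm]

end Trace

section Orthonormal

variable {𝕜 H K : Type*} [RCLike 𝕜] [NormedAddCommGroup H] [InnerProductSpace 𝕜 H]
  [NormedAddCommGroup K] [InnerProductSpace 𝕜 K]

lemma exists_orthonormal_nat (hinf : ¬ FiniteDimensional 𝕜 H) : ∃ g : ℕ → H, Orthonormal 𝕜 g := by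
  let b := Module.Basis.ofVectorSpace 𝕜 H
  have : Infinite (Module.Basis.ofVectorSpaceIndex 𝕜 H) :=
    not_finite_iff_infinite.1 fun _ => hinf b.finiteDimensional_of_finite
  let φ := Infinite.natEmbedding (Module.Basis.ofVectorSpaceIndex 𝕜 H)
  exact ⟨_, InnerProductSpace.gramSchmidtNormed_orthonormal
    (b.linearIndependent.comp φ φ.injective)⟩

lemma orthonormal_sumElim {ι κ : Type*} {e : ι → H} {f : κ → H} (he : Orthonormal 𝕜 e)
    (hf : Orthonormal 𝕜 f) (hef : ∀ i j, inner 𝕜 (e i) (f j) = 0) :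
    Orthonormal 𝕜 (Sum.elim e f) := by
  refine ⟨Sum.rec he.1 hf.1, ?_⟩
  rintro (i | i) (j | j) hij
  · exact he.2 fun h => hij (congrArg Sum.inl h)
  · exact hef i j
  · exact inner_eq_zero_symm.1 (hef j i)
  · exact hf.2 fun h => hij (congrArg Sum.inr h)

lemma exists_contraction_apply_eq {ι : Type*} [Finite ι] {g : ι → K} {e : ι → H}
    (hg : Orthonormal 𝕜 g) (he : Orthonormal 𝕜 e) :
    ∃ W : K →L[𝕜] H, ‖W‖ ≤ 1 ∧ ∀ i, W (g i) = e i := by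
  classical
  cases nonempty_fintype ι
  let W : K →L[𝕜] H := ∑ i, InnerProductSpace.rankOne 𝕜 (e i) (g i)
  have hW (x : K) : W x = ∑ i, inner 𝕜 (g i) x • e i := by simp [W]
  refine ⟨W, W.opNorm_le_bound zero_le_one fun x => ?_, fun i => ?_⟩
  · rw [one_mul, hW]
    refine le_of_sq_le_sq ?_ (norm_nonneg x)
    calc ‖∑ i, inner 𝕜 (g i) x • e i‖ ^ 2 = ∑ i, ‖inner 𝕜 (g i) x‖ ^ 2 :=
          he.orthogonalFamily.norm_sum (fun i => inner 𝕜 (g i) x) Finset.univ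
      _ ≤ ‖x‖ ^ 2 := hg.sum_inner_products_le x
  · simp [hW, orthonormal_iff_ite.1 hg]

end Orthonormal

section Density

variable {H K : Type*} [NormedAddCommGroup H] [InnerProductSpace ℂ H]
  [NormedAddCommGroup K] [InnerProductSpace ℂ K]

-- Orthonormal families of `L` can be appended to `e` and `f`, which use up all but `ε` of `‖X‖`.
lemma traceNormLE_compression_of_lt_sum {X : TraceClass H} {ε : ℝ} {n : ℕ} {e f : Fin n → H}
    (he : Orthonormal ℂ e) (hf : Orthonormal ℂ f)
    (hlt : ‖X‖ - ε < ∑ i, ‖⟪f i, toCLM X (e i)⟫‖) {L : Submodule ℂ H}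
    [L.HasOrthogonalProjection] (heL : ∀ i, e i ∈ Lᗮ) (hfL : ∀ i, f i ∈ Lᗮ) :
    TraceNormLE (L.orthogonalProjectionOnto ∘L toCLM X ∘L L.subtypeL) ε := by
  intro m e' f' he' hf'
  have hsum := X.traceNormLE.sum_norm_inner_le
    (orthonormal_sumElim he (he'.comp_linearIsometry L.subtypeₗᵢ)
      fun i j => L.inner_left_of_mem_orthogonal (e' j).2 (heL i))
    (orthonormal_sumElim hf (hf'.comp_linearIsometry L.subtypeₗᵢ)
      fun i j => L.inner_left_of_mem_orthogonal (f' j).2 (hfL i))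
  rw [Fintype.sum_sum_type] at hsum
  simp only [Sum.elim_inl, Sum.elim_inr, Function.comp_apply, Submodule.coe_subtypeₗᵢ,
    Submodule.subtype_apply] at hsum
  simp only [ContinuousLinearMap.comp_apply, Submodule.coe_subtypeL, Submodule.subtype_apply,
    Submodule.inner_orthogonalProjectionOnto_eq_of_mem_left]
  linarith

variable [CompleteSpace H] [CompleteSpace K]

-- `K` needs room for orthonormal families of every length: they are carried by contractions
-- `K → H` to the orthonormal families of `H`, which reduces to the ideal property on `K`.
lemma TraceNormLE.adjoint_comp_comp (hinf : ¬ FiniteDimensional ℂ K) {T : K →L[ℂ] K} {C : ℝ}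
    (hT : TraceNormLE T C) (A B : H →L[ℂ] K) :
    TraceNormLE (ContinuousLinearMap.adjoint A ∘L T ∘L B) (4 * ‖A‖ * ‖B‖ * C) := by
  intro n e f he hf
  obtain ⟨g, hg⟩ := exists_orthonormal_nat hinf
  have hgn : Orthonormal ℂ fun i : Fin n => g i := hg.comp _ Fin.val_injective
  obtain ⟨U, hU, hUg⟩ := exists_contraction_apply_eq hgn he
  obtain ⟨V, hV, hVg⟩ := exists_contraction_apply_eq hgn hf
  have hAV : ‖ContinuousLinearMap.adjoint (A ∘L V)‖ ≤ ‖A‖ := by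
    rw [LinearIsometryEquiv.norm_map]
    exact (opNorm_comp_le A V).trans (mul_le_of_le_one_right (norm_nonneg A) hV)
  have hBU : ‖B ∘L U‖ ≤ ‖B‖ :=
    (opNorm_comp_le B U).trans (mul_le_of_le_one_right (norm_nonneg B) hU)
  have hideal := (hT.comp_left (ContinuousLinearMap.adjoint (A ∘L V))).comp_right (B ∘L U)
    n _ _ hgn hgn
  calc ∑ i, ‖⟪f i, (ContinuousLinearMap.adjoint A ∘L T ∘L B) (e i)⟫‖
      ≤ 2 * ‖B ∘L U‖ * (2 * ‖ContinuousLinearMap.adjoint (A ∘L V)‖ * C) := by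
        simpa [adjoint_inner_right, hUg, hVg] using hideal
    _ ≤ 2 * ‖B‖ * (2 * ‖A‖ * C) := by
        have := hT.nonneg
        gcongr
    _ = 4 * ‖A‖ * ‖B‖ * C := by ring

lemma exists_traceNormLE_compression (X : TraceClass H) {ε : ℝ} (hε : 0 < ε) :
    ∃ (M : Submodule ℂ H) (_ : FiniteDimensional ℂ M),
      TraceNormLE (Mᗮ.starProjection ∘L toCLM X ∘L Mᗮ.starProjection) ε := by
  by_cases hfin : FiniteDimensional ℂ H
  · refine ⟨⊤, inferInstance, ?_⟩
    simpa using TraceNormLE.zero.mono hε.le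
  obtain ⟨n, e, f, he, hf, hlt⟩ := exists_lt_sum_norm_inner (toCLM X)
    (show 0 < ε / 4 by positivity)
  let M : Submodule ℂ H := Submodule.span ℂ (Set.range e ∪ Set.range f)
  have hM : FiniteDimensional ℂ M :=
    FiniteDimensional.span_of_finite ℂ ((Set.finite_range e).union (Set.finite_range f))
  have hperp : ¬ FiniteDimensional ℂ Mᗮ := fun _ => by
    have hsup : FiniteDimensional ℂ (M ⊔ Mᗮ : Submodule ℂ H) := inferInstance
    rw [Submodule.sup_orthogonal_of_hasOrthogonalProjection] at hsup
    exact hfin (Module.finite_def.2 (Module.Finite.iff_fg.1 hsup))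
  have hM_perp {x : H} (hx : x ∈ Set.range e ∪ Set.range f) : x ∈ Mᗮᗮ :=
    M.le_orthogonal_orthogonal (Submodule.subset_span hx)
  have hcorner := traceNormLE_compression_of_lt_sum he hf hlt
    (fun i => hM_perp (.inl ⟨i, rfl⟩)) (fun i => hM_perp (.inr ⟨i, rfl⟩))
  have hdilate := hcorner.adjoint_comp_comp hperp Mᗮ.orthogonalProjectionOnto
    Mᗮ.orthogonalProjectionOnto
  rw [Submodule.adjoint_orthogonalProjectionOnto] at hdilate
  refine ⟨M, hM, hdilate.mono ?_⟩
  have hle := Mᗮ.orthogonalProjectionOnto_norm_le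
  have hnonneg := norm_nonneg Mᗮ.orthogonalProjectionOnto
  nlinarith [mul_le_one₀ hle hnonneg hle]

lemma dense_span_rankOneTC :
    Dense (Submodule.span ℂ (Set.range fun p : H × H => rankOneTC p.1 p.2) :
      Set (TraceClass H)) := by
  refine Metric.dense_iff.2 fun X r hr => ?_
  obtain ⟨M, hM, hcomp⟩ := exists_traceNormLE_compression X (half_pos hr)
  let b := stdOrthonormalBasis ℂ M
  let Y : TraceClass H := ∑ i, rankOneTC (adjoint (toCLM X) (b i : H)) (b i : H)
    + ∑ i, rankOneTC (b i : H) (Mᗮ.starProjection (toCLM X (b i)))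
  have hXY : toCLM (X - Y)
      = Mᗮ.starProjection ∘L toCLM X ∘L Mᗮ.starProjection := by
    have hY : toCLM Y = M.starProjection ∘L toCLM X
        + Mᗮ.starProjection ∘L toCLM X ∘L M.starProjection := by
      rw [b.starProjection_eq_sum_rankOne]
      ext x
      simp [Y, adjoint_inner_left, smul_sub]
    simp only [map_sub, hY, Submodule.starProjection_orthogonal, comp_sub, sub_comp, comp_id,
      id_comp]
    abel
  refine ⟨Y, ?_, add_mem (sum_mem fun i _ => Submodule.subset_span ⟨(_, _), rfl⟩)
    (sum_mem fun i _ => Submodule.subset_span ⟨(_, _), rfl⟩)⟩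
  rw [Metric.mem_ball', dist_eq_norm, ← TraceClass.traceNorm_toCLM]
  rw [← hXY] at hcomp
  exact hcomp.traceNorm_le.trans_lt (half_lt_self hr)

end Density

section Duality

open scoped ComplexOrder

variable {H : Type*} [NormedAddCommGroup H] [InnerProductSpace ℂ H] [CompleteSpace H]

lemma clm_ext_rankOneTC {E : Type*} [NormedAddCommGroup E] [NormedSpace ℂ E]
    {f g : TraceClass H →L[ℂ] E} (h : ∀ v u, f (rankOneTC v u) = g (rankOneTC v u)) : f = g := by
  refine ContinuousLinearMap.ext_on dense_span_rankOneTC ?_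
  rintro _ ⟨⟨v, u⟩, rfl⟩
  exact h v u

lemma Tr_mul_comm (A : H →L[ℂ] H) {T : H →L[ℂ] H} (hT : IsTraceClass T) :
    Tr (A * T) = Tr (T * A) := by
  have hcomm : tracePairing A = traceL.comp (mulRightTC A) :=
    clm_ext_rankOneTC fun v u => by
      simp only [tracePairing_apply, comp_apply, traceL_apply, toCLM_mulRightTC, toCLM_rankOneTC,
        ContinuousLinearMap.mul_def, InnerProductSpace.comp_rankOne,
        InnerProductSpace.rankOne_comp, Tr_rankOne, adjoint_inner_left]
  exact DFunLike.congr_fun hcomm (.mk T hT)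

lemma exists_eq_tracePairing (f : TraceClass H →L[ℂ] ℂ) :
    ∃ A : H →L[ℂ] H, f = tracePairing A := by
  let B : H →L⋆[ℂ] H →L[ℂ] ℂ := (compL ℂ H (TraceClass H) ℂ f).comp rankOneTC
  refine ⟨adjoint (InnerProductSpace.continuousLinearMapOfBilin B),
    clm_ext_rankOneTC fun v u => ?_⟩
  rw [tracePairing_apply, toCLM_rankOneTC, ContinuousLinearMap.mul_def,
    InnerProductSpace.comp_rankOne, Tr_rankOne, adjoint_inner_right,
    InnerProductSpace.continuousLinearMapOfBilin_apply]
  rfl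

instance [TopologicalSpace.SeparableSpace H] :
    TopologicalSpace.SeparableSpace (TraceClass H) := by
  have hcont : Continuous fun p : H × H => rankOneTC p.1 p.2 := by fun_prop
  rw [← TopologicalSpace.isSeparable_univ_iff, ← dense_span_rankOneTC.closure_eq]
  exact ((TopologicalSpace.isSeparable_range hcont).span (R := ℂ)).closure

lemma Tr_nonneg {T : H →L[ℂ] H} (hT : T.IsPositive) : 0 ≤ Tr T :=
  tsum_nonneg fun i => hT.inner_nonneg_right (stdONB H i)

lemma Tr_mul_nonneg {F T : H →L[ℂ] H} (hF : F.IsPositive) (hT : T.IsPositive)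
    (htc : IsTraceClass T) : 0 ≤ Tr (F * T) := by
  rw [← nonneg_iff_isPositive] at hF
  let S := CFC.sqrt F
  have hS : IsSelfAdjoint S := (CFC.sqrt_nonneg F).isSelfAdjoint
  have hSF : S * S = F := CFC.sqrt_mul_sqrt_self F
  have hST : IsTraceClass (S * T) := (htc.traceNormLE.comp_left S).isTraceClass
  have hSTS : (S * T * S).IsPositive := by
    have := hT.conj_adjoint S
    rwa [hS.adjoint_eq] at this
  rw [← hSF, mul_assoc, Tr_mul_comm S hST]
  exact Tr_nonneg hSTS

end Duality

section SeparatingFunctionals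

variable {𝕜 E : Type*} [RCLike 𝕜] [NormedAddCommGroup E] [NormedSpace 𝕜 E]
  [TopologicalSpace.SeparableSpace E]

variable (𝕜 E) in
lemma exists_seq_dual_separating :
    ∃ f : ℕ → E →L[𝕜] 𝕜, ∀ x, (∀ k, f k x = 0) → x = 0 := by
  choose f hf_norm hf using exists_dual_vector'' 𝕜 (E := E)
  refine ⟨fun k => f (TopologicalSpace.denseSeq E k), fun x hx => norm_le_zero_iff.1 ?_⟩
  refine le_of_forall_pos_le_add fun ε hε => ?_
  obtain ⟨k, hk⟩ := Metric.denseRange_iff.1 (TopologicalSpace.denseRange_denseSeq E) x (ε / 2)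
    (half_pos hε)
  set y := TopologicalSpace.denseSeq E k
  rw [dist_eq_norm] at hk
  have hy : ‖y‖ ≤ ‖x - y‖ := by
    calc ‖y‖ = ‖f y (x - y)‖ := by
          rw [map_sub, hx k, hf, zero_sub, norm_neg, norm_algebraMap', norm_norm]
      _ ≤ 1 * ‖x - y‖ := (f y).le_of_opNorm_le (hf_norm y) _
      _ = ‖x - y‖ := one_mul _
  linarith [norm_le_norm_add_norm_sub' x y]

lemma exists_seq_dual_annihilating (N : Submodule 𝕜 E) (hN : IsClosed (N : Set E)) :
    ∃ f : ℕ → E →L[𝕜] 𝕜, ∀ x, x ∈ N ↔ ∀ k, f k x = 0 := by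
  have : IsClosed (N : Set E) := hN
  have : TopologicalSpace.SeparableSpace (E ⧸ N) := N.isQuotientMap_mkQL.separableSpace
  obtain ⟨f, hf⟩ := exists_seq_dual_separating 𝕜 (E ⧸ N)
  refine ⟨fun k => (f k).comp N.mkQL, fun x => ?_⟩
  rw [← Submodule.Quotient.mk_eq_zero N]
  exact ⟨fun h k => by simp [h], hf _⟩

end SeparatingFunctionals

section SelfAdjointAnnihilator

open scoped ComplexStarModule

lemma map_realPart_imaginaryPart_eq_zero_iff {A V : Type*} [AddCommGroup A] [Module ℂ A]
    [StarAddMonoid A] [StarModule ℂ A] [AddCommGroup V] [Module ℂ V] (φ : A →ₗ[ℂ] V) (b : A) :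
    φ (ℜ b) = 0 ∧ φ (ℑ b) = 0 ↔ φ b = 0 ∧ φ (star b) = 0 := by
  constructor
  · rintro ⟨hre, him⟩
    have hb : φ b = 0 := by
      rw [← realPart_add_I_smul_imaginaryPart b, map_add, map_smul, hre, him, smul_zero, add_zero]
    have hb_star : φ (star b) = 0 := by
      rw [← realPart_add_I_smul_imaginaryPart b, star_add, star_smul, (ℜ b).2.star_eq,
        (ℑ b).2.star_eq, map_add, map_smul, hre, him, smul_zero, add_zero]
    exact ⟨hb, hb_star⟩
  · rintro ⟨hb, hb_star⟩
    rw [realPart_apply_coe, imaginaryPart_apply_coe]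
    simp [hb, hb_star]

variable {H : Type*} [NormedAddCommGroup H] [InnerProductSpace ℂ H] [CompleteSpace H]

lemma tracePairing_star (A : H →L[ℂ] H) (X : TraceClass H) :
    tracePairing (star A) X = star (tracePairing A (star X)) := by
  rw [tracePairing_apply, tracePairing_apply, ← Tr_adjoint, ← star_eq_adjoint, star_mul,
    TraceClass.toCLM_star, star_star, Tr_mul_comm _ X.isTraceClass]

lemma exists_selfAdjoint_annihilating [TopologicalSpace.SeparableSpace H]
    (N : Submodule ℂ (TraceClass H)) (hN : IsClosed (N : Set (TraceClass H)))
    (hstar : ∀ X ∈ N, star X ∈ N) :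
    ∃ a : ℕ → H →L[ℂ] H, (∀ k, IsSelfAdjoint (a k)) ∧
      ∀ X, X ∈ N ↔ ∀ k, tracePairing (a k) X = 0 := by
  obtain ⟨f, hf⟩ := exists_seq_dual_annihilating N hN
  choose B hB using fun k => exists_eq_tracePairing (f k)
  simp only [hB] at hf
  let a : ℕ ⊕ ℕ → selfAdjoint (H →L[ℂ] H) := Sum.elim (fun k => ℜ (B k)) (fun k => ℑ (B k))
  refine ⟨fun k => a (Equiv.natSumNatEquivNat.symm k), fun k => (a _).2, fun X => ?_⟩
  calc X ∈ N ↔ ∀ k, tracePairing (B k) X = 0 ∧ tracePairing (star (B k)) X = 0 := by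
        refine ⟨fun hX k => ⟨(hf X).1 hX k, ?_⟩, fun h => (hf X).2 fun k => (h k).1⟩
        rw [tracePairing_star, (hf _).1 (hstar X hX) k, star_zero]
    _ ↔ ∀ k, tracePairing (ℜ (B k) : H →L[ℂ] H) X = 0 ∧
          tracePairing (ℑ (B k) : H →L[ℂ] H) X = 0 :=
        forall_congr' fun k =>
          (map_realPart_imaginaryPart_eq_zero_iff
            ((tracePairing (H := H)).flip X).toLinearMap (B k)).symm
    _ ↔ ∀ i, tracePairing (a i : H →L[ℂ] H) X = 0 := by
        rw [Sum.forall, forall_and]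
        rfl
    _ ↔ _ := Equiv.natSumNatEquivNat.symm.forall_congr_right.symm

end SelfAdjointAnnihilator

section POVM

variable {A : Type*} [CStarAlgebra A] [PartialOrder A]

/-- A positive operator-valued measure on an index set `ι`, given by its effects. Their sum is taken
to converge absolutely in norm, which is more than the usual strong convergence. -/
structure IsSummablePOVM {ι : Type*} (F : ι → A) : Prop where
  nonneg : ∀ k, 0 ≤ F k
  summable_norm : Summable fun k => ‖F k‖
  hasSum_one : HasSum F 1

lemma IsSummablePOVM.forall_map_eq_zero_iff {F : ℕ → A} (hF : IsSummablePOVM F) (φ : A →L[ℂ] ℂ) :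
    (∀ k, φ (F k) = 0) ↔ φ 1 = 0 ∧ ∀ k, φ (F (k + 1)) = 0 := by
  have hφ1 : HasSum (fun k => φ (F k)) (φ 1) := φ.hasSum hF.hasSum_one
  constructor
  · intro h
    simp only [h] at hφ1
    exact ⟨hφ1.unique hasSum_zero, fun k => h (k + 1)⟩
  · rintro ⟨h1, hsucc⟩
    have h0 : HasSum (fun k => φ (F k)) (φ (F 0)) := hasSum_single 0 fun k hk => by
      obtain ⟨j, rfl⟩ := Nat.exists_eq_succ_of_ne_zero hk
      exact hsucc j
    rintro (_ | k)
    exacts [(h0.unique hφ1).trans h1, hsucc k]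

variable [StarOrderedRing A]

lemma add_norm_smul_one_nonneg {a : A} (ha : IsSelfAdjoint a) : 0 ≤ a + ‖a‖ • (1 : A) := by
  have := ha.neg_algebraMap_norm_le_self
  rwa [Algebra.algebraMap_eq_smul_one, neg_le_iff_add_nonneg] at this

lemma exists_smul_add_norm_smul_one_mem {a : A} (ha : IsSelfAdjoint a) {r : ℝ} (hr : 0 < r) :
    ∃ c : ℝ, c ≠ 0 ∧ 0 ≤ c • (a + ‖a‖ • (1 : A)) ∧ ‖c • (a + ‖a‖ • (1 : A))‖ ≤ r := by
  set b := a + ‖a‖ • (1 : A)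
  have hc : 0 < r / (‖b‖ + 1) := by positivity
  refine ⟨r / (‖b‖ + 1), hc.ne', smul_nonneg hc.le (add_norm_smul_one_nonneg ha), ?_⟩
  rw [norm_smul, Real.norm_of_nonneg hc.le, div_mul_eq_mul_div, div_le_iff₀ (by positivity)]
  gcongr
  exact (lt_add_one _).le

lemma exists_isSummablePOVM_succ_eq {G : ℕ → A} (hG : ∀ k, 0 ≤ G k) {r : ℕ → ℝ} (hr : HasSum r 1)
    (hGr : ∀ k, ‖G k‖ ≤ r k) : ∃ F : ℕ → A, IsSummablePOVM F ∧ ∀ k, F (k + 1) = G k := by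
  have hsum : Summable G := .of_norm_bounded hr.summable hGr
  have hle : ∑' k, G k ≤ 1 :=
    (CStarAlgebra.norm_le_one_iff_of_nonneg _ (tsum_nonneg hG)).1 (tsum_of_norm_bounded hr hGr)
  let F : ℕ → A := fun k => Nat.casesOn k (1 - ∑' k, G k) G
  refine ⟨F, ⟨?_, ?_, ?_⟩, fun k => rfl⟩
  · rintro (_ | k)
    exacts [sub_nonneg.2 hle, hG k]
  · exact (summable_nat_add_iff 1).1 (.of_nonneg_of_le (fun _ => norm_nonneg _) hGr hr.summable)
  · simpa [F] using (hasSum_nat_add_iff (f := F) 1).1 hsum.hasSum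

lemma exists_isSummablePOVM_map_eq_zero_iff {a : ℕ → A} (ha : ∀ k, IsSelfAdjoint (a k)) :
    ∃ F : ℕ → A, IsSummablePOVM F ∧
      ∀ φ : A →L[ℂ] ℂ, (∀ k, φ (F k) = 0) ↔ φ 1 = 0 ∧ ∀ k, φ (a k) = 0 := by
  have hr (k : ℕ) : (0 : ℝ) < 1 / 2 / 2 ^ k := by positivity
  choose c hc hG hGr using fun k => exists_smul_add_norm_smul_one_mem (ha k) (hr k)
  obtain ⟨F, hF, hFG⟩ := exists_isSummablePOVM_succ_eq hG (hasSum_geometric_two' 1) hGr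
  refine ⟨F, hF, fun φ => (hF.forall_map_eq_zero_iff φ).trans (and_congr_right fun h1 => ?_)⟩
  refine forall_congr' fun k => ?_
  rw [hFG, φ.map_smul_of_tower, map_add, φ.map_smul_of_tower, h1, smul_zero, add_zero,
    smul_eq_zero_iff_right (hc k)]

end POVM

section MatPos

open scoped ComplexOrder

variable {H : Type*} [NormedAddCommGroup H] [InnerProductSpace ℂ H] {n : ℕ}

lemma matPos_iff {M : Fin n → Fin n → H →L[ℂ] H} :
    MatPos M ↔ ∀ x : Fin n → H, 0 ≤ ∑ i, ∑ j, ⟪x i, M i j (x j)⟫ := by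
  simp only [MatPos, Complex.nonneg_iff, eq_comm (a := (0 : ℝ))]

lemma matPos_of_hasSum {ι : Type*} {M : ι → Fin n → Fin n → H →L[ℂ] H}
    {S : Fin n → Fin n → H →L[ℂ] H} (hM : ∀ k, MatPos (M k))
    (hS : ∀ i j, HasSum (fun k => M k i j) (S i j)) : MatPos S := by
  rw [matPos_iff]
  intro x
  have hsum : HasSum (fun k => ∑ i, ∑ j, ⟪x i, M k i j (x j)⟫) (∑ i, ∑ j, ⟪x i, S i j (x j)⟫) :=
    hasSum_sum fun i _ => hasSum_sum fun j _ =>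
      ((innerSL ℂ (x i)).comp (ContinuousLinearMap.apply ℂ H (x j))).hasSum (hS i j)
  exact hsum.nonneg fun k => matPos_iff.1 (hM k) x

lemma MatPos.isPositive_sum_smul [CompleteSpace H] {M : Fin n → Fin n → H →L[ℂ] H} (hM : MatPos M)
    (c : Fin n → ℂ) : (∑ i, ∑ j, (star (c i) * c j) • M i j).IsPositive := by
  rw [isPositive_iff_complex]
  intro y
  have hinner : ⟪(∑ i, ∑ j, (star (c i) * c j) • M i j) y, y⟫
      = star (∑ i, ∑ j, ⟪c i • y, M i j (c j • y)⟫) := by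
    rw [← inner_conj_symm]
    simp only [Complex.star_def, sum_apply, smul_apply, inner_sum, inner_smul_left,
      inner_smul_right, map_smul, mul_assoc, mul_left_comm]
  have hnonneg := star_nonneg_iff.2 (matPos_iff.1 hM fun i => c i • y)
  rw [← hinner, Complex.nonneg_iff] at hnonneg
  exact ⟨Complex.ext rfl hnonneg.2, hnonneg.1⟩

variable [CompleteSpace H] {K : Type*} [NormedAddCommGroup K] [InnerProductSpace ℂ K]

lemma MatPos.tracePairing_smul_rankOne {M : Fin n → Fin n → TraceClass H}
    (hM : MatPos fun i j => toCLM (M i j)) {F : H →L[ℂ] H} (hF : 0 ≤ F) (g : K) :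
    MatPos fun i j => tracePairing F (M i j) • InnerProductSpace.rankOne ℂ g g := by
  rw [matPos_iff]
  intro x
  let c (i : Fin n) : ℂ := ⟪g, x i⟫
  let Z : TraceClass H := ∑ i, ∑ j, (star (c i) * c j) • M i j
  have hZ : (toCLM Z).IsPositive := by
    simpa [Z] using hM.isPositive_sum_smul c
  calc 0 ≤ tracePairing F Z :=
        Tr_mul_nonneg ((nonneg_iff_isPositive F).1 hF) hZ Z.isTraceClass
    _ = ∑ i, ∑ j, (star (c i) * c j) * tracePairing F (M i j) := by
        simp only [Z, map_sum, map_smul, smul_eq_mul]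
    _ = _ := by
        refine Finset.sum_congr rfl fun i _ => Finset.sum_congr rfl fun j _ => ?_
        rw [smul_apply, InnerProductSpace.rankOne_apply, inner_smul_right, inner_smul_right]
        simp only [c, Complex.star_def, inner_conj_symm]
        ring

end MatPos

section MeasurePrepare

variable {H K : Type*} [NormedAddCommGroup H] [InnerProductSpace ℂ H] [CompleteSpace H]
  [NormedAddCommGroup K] [InnerProductSpace ℂ K] [CompleteSpace K] {ι : Type*}

/-- The map `X ↦ ∑ₖ Tr (Fₖ X) |gₖ⟩⟨gₖ|`: measure `F`, then prepare the pure state `gₖ` upon the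
outcome `k`. It has the junk value `0` if this series of maps does not converge. -/
def measurePrepare (F : ι → H →L[ℂ] H) (g : ι → K) : TraceClass H →L[ℂ] TraceClass K :=
  ∑' k, (tracePairing (F k)).smulRight (rankOneTC (g k) (g k))

lemma isState_rankOne {g : K} (hg : ‖g‖ = 1) : IsState (InnerProductSpace.rankOne ℂ g g) := by
  refine ⟨(traceNormLE_rankOne g g).isTraceClass, InnerProductSpace.isPositive_rankOne_self g, ?_⟩
  rw [Tr_rankOne, inner_self_eq_norm_sq_to_K, hg]
  simp

variable {F : ι → H →L[ℂ] H} {g : ι → K}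

lemma hasSum_measurePrepare (hF : Summable fun k => ‖F k‖) (hg : ∀ k, ‖g k‖ = 1)
    (X : TraceClass H) : HasSum (fun k => tracePairing (F k) X • rankOneTC (g k) (g k))
      (measurePrepare F g X) := by
  have hnorm (k : ι) : ‖(tracePairing (F k)).smulRight (rankOneTC (g k) (g k))‖
      ≤ ‖tracePairing (H := H)‖ * ‖F k‖ := by
    have hrank : ‖rankOneTC (g k) (g k)‖ ≤ 1 := by
      have hle := norm_rankOneTC_le (g k) (g k)
      rwa [hg, one_mul] at hle
    rw [norm_smulRight_apply]
    exact (mul_le_of_le_one_right (norm_nonneg _) hrank).trans (le_opNorm _ _)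
  have hsum : HasSum _ (measurePrepare F g) :=
    (Summable.of_norm_bounded (hF.mul_left _) hnorm).hasSum
  have happly := (ContinuousLinearMap.apply ℂ (TraceClass K) X).hasSum hsum
  simpa only [apply_apply, smulRight_apply] using happly

lemma Tr_measurePrepare (hF : IsSummablePOVM F) (hg : ∀ k, ‖g k‖ = 1) (X : TraceClass H) :
    Tr (toCLM (measurePrepare F g X)) = Tr (toCLM X) := by
  have hout : HasSum (fun k => tracePairing (F k) X) (traceL (measurePrepare F g X)) := by
    simpa [(isState_rankOne (hg _)).2.2] using
      (traceL (H := K)).hasSum (hasSum_measurePrepare hF.summable_norm hg X)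
  have hin : HasSum (fun k => tracePairing (F k) X) (tracePairing 1 X) :=
    ((tracePairing (H := H)).flip X).hasSum hF.hasSum_one
  simpa using hout.unique hin

lemma matPos_measurePrepare (hF : IsSummablePOVM F) (hg : ∀ k, ‖g k‖ = 1) {n : ℕ}
    {M : Fin n → Fin n → TraceClass H} (hM : MatPos fun i j => toCLM (M i j)) :
    MatPos fun i j => toCLM (measurePrepare F g (M i j)) := by
  refine matPos_of_hasSum (fun k => hM.tracePairing_smul_rankOne (hF.nonneg k) (g k))
    fun i j => ?_
  have hsum := (toCLM (H := K)).hasSum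
    (hasSum_measurePrepare hF.summable_norm hg (M i j))
  simpa only [map_smul, toCLM_rankOneTC] using hsum

lemma measurePrepare_eq_zero_iff (hF : Summable fun k => ‖F k‖) (hg : Orthonormal ℂ g)
    (X : TraceClass H) : measurePrepare F g X = 0 ↔ ∀ k, tracePairing (F k) X = 0 := by
  have hsum := hasSum_measurePrepare hF hg.1 X
  constructor
  · intro h0 k
    let φ : TraceClass K →L[ℂ] ℂ := innerSL ℂ (g k) ∘L apply ℂ K (g k) ∘L toCLM
    have hoff (l : ι) (hl : l ≠ k) :
        φ (tracePairing (F l) X • rankOneTC (g l) (g l)) = 0 := by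
      simp [φ, hg.2 hl]
    have hdiag : φ (tracePairing (F k) X • rankOneTC (g k) (g k)) = tracePairing (F k) X := by
      simp [φ, inner_self_eq_norm_sq_to_K, hg.1]
    rw [← hdiag, (hasSum_single k hoff).unique (φ.hasSum hsum), h0, map_zero]
  · intro h
    simp only [h, zero_smul] at hsum
    exact hsum.unique hasSum_zero

variable {Φ : (H →L[ℂ] H) →ₗ[ℂ] (K →L[ℂ] K)}

lemma isChannel_of_eq_measurePrepare (hF : IsSummablePOVM F) (hg : ∀ k, ‖g k‖ = 1)
    (hΦ : ∀ X, Φ (toCLM X) = toCLM (measurePrepare F g X)) :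
    IsChannel Φ where
  maps_traceClass X hX := by
    rw [← TraceClass.toCLM_mk X hX, hΦ]
    exact TraceClass.isTraceClass _
  completelyPositive n M hM hMpos := by
    let M' (i j : Fin n) : TraceClass H := .mk (M i j) (hM i j)
    have hΦM (i j : Fin n) : Φ (M i j) = toCLM (measurePrepare F g (M' i j)) :=
      hΦ (M' i j)
    simp only [hΦM]
    exact matPos_measurePrepare hF hg hMpos
  tracePreserving X hX := by
    rw [← TraceClass.toCLM_mk X hX, hΦ, Tr_measurePrepare hF hg]

lemma isSEB_of_eq_measurePrepare {F : ℕ → H →L[ℂ] H} {g : ℕ → K} (hF : IsSummablePOVM F)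
    (hg : ∀ k, ‖g k‖ = 1)
    (hΦ : ∀ X, Φ (toCLM X) = toCLM (measurePrepare F g X)) : IsSEB Φ := by
  refine ⟨fun k => InnerProductSpace.rankOne ℂ (g k) (g k), F, fun k => isState_rankOne (hg k),
    fun k => (nonneg_iff_isPositive _).1 (hF.nonneg k), fun x => ?_, fun X hX => ?_⟩
  · have hx := (ContinuousLinearMap.apply ℂ H x).hasSum hF.hasSum_one
    simpa using hx
  · have hsum := TraceClass.hasSumTN_toCLM (hasSum_measurePrepare hF.summable_norm hg (.mk X hX))
    rw [← hΦ] at hsum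
    simpa only [map_smul, toCLM_rankOneTC, tracePairing_apply, TraceClass.toCLM_mk] using hsum

end MeasurePrepare

section Extension

variable {H K : Type*} [NormedAddCommGroup H] [InnerProductSpace ℂ H]
  [NormedAddCommGroup K] [InnerProductSpace ℂ K]

lemma exists_linearMap_eq_on_traceClass (Ψ : TraceClass H →ₗ[ℂ] TraceClass K) :
    ∃ Φ : (H →L[ℂ] H) →ₗ[ℂ] (K →L[ℂ] K),
      ∀ X, Φ (toCLM X) = toCLM (Ψ X) := by
  obtain ⟨r, hr⟩ := (toCLM (H := H)).toLinearMap.exists_leftInverse_of_injective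
    (LinearMap.ker_eq_bot.2 fun _ _ => TraceClass.ext)
  refine ⟨toCLM.toLinearMap ∘ₗ Ψ ∘ₗ r, fun X => ?_⟩
  have hrX : r (toCLM X) = X := LinearMap.congr_fun hr X
  simp [hrX]

lemma isClosed_comap_toCLM {N : Submodule ℂ (H →L[ℂ] H)}
    (hN : ∀ X : H →L[ℂ] H, IsTraceClass X →
      (∀ ε : ℝ, 0 < ε → ∃ Y ∈ N, traceNorm (X - Y) < ε) → X ∈ N) :
    IsClosed (N.comap toCLM.toLinearMap : Set (TraceClass H)) := by
  refine isClosed_of_closure_subset fun X hX => hN _ X.isTraceClass fun ε hε => ?_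
  obtain ⟨Y, hY, hXY⟩ := Metric.mem_closure_iff.1 hX ε hε
  exact ⟨_, hY, (dist_eq_norm X Y).symm.trans_lt hXY⟩

end Extension

theorem selfAdjoint_traceZero_subspace_is_null_space_of_SEB_general
    {H K : Type*} [NormedAddCommGroup H] [InnerProductSpace ℂ H] [CompleteSpace H]
    [TopologicalSpace.SeparableSpace H] [NormedAddCommGroup K] [InnerProductSpace ℂ K]
    [CompleteSpace K] (hinf : ¬ FiniteDimensional ℂ K) (N : Submodule ℂ (TraceClass H))
    (hN_tr0 : ∀ X ∈ N, traceL X = 0) (hN_sa : ∀ X ∈ N, star X ∈ N)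
    (hN_closed : IsClosed (N : Set (TraceClass H))) :
    ∃ Φ : (H →L[ℂ] H) →ₗ[ℂ] (K →L[ℂ] K),
      IsChannel Φ ∧ IsSEB Φ ∧ ∀ X, Φ (toCLM X) = 0 ↔ X ∈ N := by
  obtain ⟨a, ha, hNa⟩ := exists_selfAdjoint_annihilating N hN_closed hN_sa
  obtain ⟨F, hF, hFa⟩ := exists_isSummablePOVM_map_eq_zero_iff ha
  obtain ⟨g, hg⟩ := exists_orthonormal_nat hinf
  obtain ⟨Φ, hΦ⟩ := exists_linearMap_eq_on_traceClass (measurePrepare F g).toLinearMap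
  refine ⟨Φ, isChannel_of_eq_measurePrepare hF hg.1 hΦ, isSEB_of_eq_measurePrepare hF hg.1 hΦ,
    fun X => ?_⟩
  calc Φ (toCLM X) = 0 ↔ measurePrepare F g X = 0 := by
        rw [hΦ, ← map_zero toCLM]
        exact TraceClass.ext_iff.symm
    _ ↔ ∀ k, tracePairing (F k) X = 0 := measurePrepare_eq_zero_iff hF.summable_norm hg X
    _ ↔ traceL X = 0 ∧ ∀ k, tracePairing (a k) X = 0 := by
        simpa using hFa (tracePairing.flip X)
    _ ↔ X ∈ N := by
        rw [← hNa]
        exact and_iff_right_of_imp (hN_tr0 X)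

/-- Every trace-norm-closed self-adjoint subspace of trace-zero
trace-class operators on a separable infinite-dimensional Hilbert space is the null
space of some strongly entanglement breaking channel. -/
theorem selfAdjoint_traceZero_subspace_is_null_space_of_SEB
    {H : Type*} [NormedAddCommGroup H] [InnerProductSpace ℂ H] [CompleteSpace H]
    [TopologicalSpace.SeparableSpace H] (hinf : ¬ FiniteDimensional ℂ H)
    (N : Submodule ℂ (H →L[ℂ] H))
    (hN_tc : ∀ X ∈ N, IsTraceClass X)
    (hN_tr0 : ∀ X ∈ N, Tr X = 0)
    (hN_sa : ∀ X ∈ N, ContinuousLinearMap.adjoint X ∈ N)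
    (hN_closed : ∀ X : H →L[ℂ] H, IsTraceClass X →
      (∀ ε : ℝ, 0 < ε → ∃ Y ∈ N, traceNorm (X - Y) < ε) → X ∈ N) :
    ∃ Φ : (H →L[ℂ] H) →ₗ[ℂ] (H →L[ℂ] H),
      IsChannel Φ ∧ IsSEB Φ ∧
      ∀ X : H →L[ℂ] H, IsTraceClass X → (Φ X = 0 ↔ X ∈ N) := by
  obtain ⟨Φ, hΦ, hSEB, hnull⟩ := selfAdjoint_traceZero_subspace_is_null_space_of_SEB_general hinf
    (N.comap toCLM.toLinearMap) (fun X => hN_tr0 (toCLM X))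
    (fun X => hN_sa (toCLM X)) (isClosed_comap_toCLM hN_closed)
  exact ⟨Φ, hΦ, hSEB, fun X hX => hnull (.mk X hX)⟩

end
end

section
/- Let H be a complex separable Hilbert space, and let Φ: T(H) → T(H) be a channel given by Φ(X) = Σ_{k=1}^∞ E_k X E_k* with rank-one operators E_k = u_k v_k*, where u_k, v_k ∈ H, ‖u_k‖ = 1 for all k, and Σ_{k=1}^∞ v_k v_k* = I_H (strong operator topology). Let Φ*: B(H) → B(H) be the dual map, Φ*(Y) = Σ_{k=1}^∞ E_k* Y E_k. Then an orthogonal projection P ∈ B(H) satisfies Φ*(P) = P if and only if P E_k = E_k P for all k. -/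
noncomputable section

open scoped ComplexInnerProductSpace
open ContinuousLinearMap Filter Topology

/-!
If `∑ₖ Eₖ* Q Eₖ = P` for projections `P` and `Q`, then for `y` in the kernel of `P` the scalars
`‖Q Eₖ y‖²` sum to `⟪P y, y⟫ = 0`, so every `Eₖ` maps `ker P` into `ker Q`. As `∑ₖ Eₖ* Eₖ = 1`,
the complementary projections satisfy the same relation, so every `Eₖ` also maps `ran P` into
`ran Q`; together these inclusions say `Q Eₖ = Eₖ P`. Rank one enters only through
`Eₖ* Eₖ = ‖uₖ‖² vₖ vₖ*`.
-/

theorem adjoint_rankOne_comp_rankOne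
    {H K : Type*} [NormedAddCommGroup H] [InnerProductSpace ℂ H] [CompleteSpace H]
    [NormedAddCommGroup K] [InnerProductSpace ℂ K] [CompleteSpace K] (u : K) (v : H) :
    adjoint (rankOne u v) ∘L rankOne u v = (‖u‖ ^ 2 : ℂ) • rankOne v v := by
  have rankOne_eq (x : K) (y : H) : rankOne x y = InnerProductSpace.rankOne ℂ x y := rfl
  rw [rankOne_eq, InnerProductSpace.adjoint_rankOne, InnerProductSpace.rankOne_comp_rankOne,
    inner_self_eq_norm_sq_to_K]
  rfl

section KrausFamily

variable {𝕜 H K ι : Type*} [RCLike 𝕜]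
  [NormedAddCommGroup H] [InnerProductSpace 𝕜 H] [CompleteSpace H]
  [NormedAddCommGroup K] [InnerProductSpace 𝕜 K] [CompleteSpace K]

theorem hasSum_norm_sq_of_hasSum_adjoint_comp_self
    {T : ι → H →L[𝕜] K} {x y : H} (h : HasSum (fun k => (adjoint (T k) ∘L T k) x) y) :
    HasSum (fun k => ‖T k x‖ ^ 2) (RCLike.re (inner 𝕜 x y)) := by
  simp only [apply_norm_sq_eq_inner_adjoint_right]
  exact RCLike.hasSum_re 𝕜 ((innerSL 𝕜 x).hasSum h)

theorem apply_eq_zero_of_hasSum_adjoint_comp_self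
    {T : ι → H →L[𝕜] K} {x : H} (h : HasSum (fun k => (adjoint (T k) ∘L T k) x) 0) (k : ι) :
    T k x = 0 := by
  have hnorms := hasSum_norm_sq_of_hasSum_adjoint_comp_self h
  rw [inner_zero_right, map_zero, hasSum_zero_iff_of_nonneg fun k => sq_nonneg ‖T k x‖] at hnorms
  simpa using congrFun hnorms k

theorem adjoint_comp_comp_of_isStarProjection
    {Q : K →L[𝕜] K} (hQ : IsStarProjection Q) (E : H →L[𝕜] K) :
    adjoint (Q ∘L E) ∘L (Q ∘L E) = adjoint E ∘L Q ∘L E := by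
  have hQQ : Q ∘L Q = Q := hQ.isIdempotentElem
  rw [adjoint_comp, hQ.isSelfAdjoint.adjoint_eq, comp_assoc, ← comp_assoc Q Q, hQQ]

theorem comp_comp_one_sub_eq_zero_of_hasSum_adjoint_comp_comp
    {E : ι → H →L[𝕜] K} {P : H →L[𝕜] H} {Q : K →L[𝕜] K}
    (hP : IsIdempotentElem P) (hQ : IsStarProjection Q)
    (h : ∀ x, HasSum (fun k => (adjoint (E k) ∘L Q ∘L E k) x) (P x)) (k : ι) :
    Q ∘L E k ∘L (1 - P) = 0 := by
  ext x
  have hker : P (x - P x) = 0 := congr($hP.mul_one_sub_self x)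
  have hsum := h (x - P x)
  simp only [hker, ← adjoint_comp_comp_of_isStarProjection hQ] at hsum
  exact apply_eq_zero_of_hasSum_adjoint_comp_self hsum k

theorem hasSum_adjoint_comp_one_sub_comp
    {E : ι → H →L[𝕜] K} {P : H →L[𝕜] H} {Q : K →L[𝕜] K} {x : H}
    (hE : HasSum (fun k => (adjoint (E k) ∘L E k) x) x)
    (h : HasSum (fun k => (adjoint (E k) ∘L Q ∘L E k) x) (P x)) :
    HasSum (fun k => (adjoint (E k) ∘L (1 - Q) ∘L E k) x) ((1 - P) x) := by
  simpa using hE.sub h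

theorem projection_fixed_point_iff_commutes_general
    {E : ι → H →L[𝕜] K} (hE : ∀ x, HasSum (fun k => (adjoint (E k) ∘L E k) x) x)
    {P : H →L[𝕜] H} {Q : K →L[𝕜] K} (hP : IsIdempotentElem P) (hQ : IsStarProjection Q) :
    (∀ x, HasSum (fun k => (adjoint (E k) ∘L Q ∘L E k) x) (P x)) ↔
      ∀ k, Q ∘L E k = E k ∘L P := by
  constructor
  · intro h k
    have hker : Q ∘L E k ∘L (1 - P) = 0 :=
      comp_comp_one_sub_eq_zero_of_hasSum_adjoint_comp_comp hP hQ h k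
    have hrange : (1 - Q) ∘L E k ∘L P = 0 := by
      simpa only [sub_sub_cancel] using
        comp_comp_one_sub_eq_zero_of_hasSum_adjoint_comp_comp hP.one_sub hQ.one_sub
          (fun x => hasSum_adjoint_comp_one_sub_comp (hE x) (h x)) k
    have hQE : Q ∘L E k = Q ∘L E k ∘L P := by
      simpa [comp_sub, one_def, sub_eq_zero] using hker
    have hEP : E k ∘L P = Q ∘L E k ∘L P := by
      simpa [sub_comp, one_def, sub_eq_zero] using hrange
    exact hQE.trans hEP.symm
  · intro h x
    simpa only [h, comp_apply] using hE (P x)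

end KrausFamily

/-- For a channel with rank-one Kraus operators `Eₖ = uₖ vₖ*`
(`‖uₖ‖ = 1`, `∑ₖ vₖ vₖ* = I` in SOT) and dual map `Φ*(Y) = ∑ₖ Eₖ* Y Eₖ`, an
orthogonal projection `P` is a fixed point of `Φ*` iff `P` commutes with every `Eₖ`. -/
theorem projection_fixed_point_iff_commutes
    {H : Type*} [NormedAddCommGroup H] [InnerProductSpace ℂ H] [CompleteSpace H]
    [TopologicalSpace.SeparableSpace H]
    (u v : ℕ → H) (hu : ∀ k, ‖u k‖ = 1)
    (hv : ∀ x : H, HasSum (fun k => ⟪v k, x⟫ • v k) x)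
    (E : ℕ → (H →L[ℂ] H)) (hE : ∀ k, E k = rankOne (u k) (v k))
    (P : H →L[ℂ] H) (hPsa : IsSelfAdjoint P) (hPidem : P * P = P) :
    (∀ x : H,
        HasSum (fun k => (ContinuousLinearMap.adjoint (E k) * P * E k) x) (P x)) ↔
    ∀ k, P * E k = E k * P := by
  have hunital (x : H) : HasSum (fun k => (adjoint (E k) ∘L E k) x) x := by
    simp only [hE, adjoint_rankOne_comp_rankOne, hu]
    simpa [rankOne] using hv x
  exact projection_fixed_point_iff_commutes_general hunital hPidem ⟨hPidem, hPsa⟩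

end
end

section
/- Let H be a complex separable Hilbert space, and let Φ: T(H) → T(H) be a channel given by Φ(X) = Σ_{k=1}^∞ E_k X E_k* with rank-one operators E_k = u_k v_k*, where u_k, v_k ∈ H, ‖u_k‖ = 1 for all k, and Σ_{k=1}^∞ v_k v_k* = I_H (strong operator topology). Then any two orthogonal projections P and Q in the fixed point set Fix(Φ*) = {Y ∈ B(H) : Φ*(Y) = Y} of the dual map Φ* commute: P Q = Q P. -/
/-!
Write `Φ*(Y) = ∑ₖ Eₖ* Y Eₖ`. If `S* S` is fixed by `Φ*`, then `‖S x‖² = ∑ₖ ‖S (Eₖ x)‖²`, so every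
`Eₖ` maps the kernel of `S` into itself. For a fixed projection `P` this applies to `P` and, as `Φ*`
is unital, to `1 - P`; hence `P` commutes with every `Eₖ`, and with every `Eₖ*`. An operator
commuting with `Eₖ* = vₖ uₖ*` has `vₖ` as an eigenvector, so two fixed projections commute on the
vectors `vₖ`, which span a dense subspace.
-/

noncomputable section

open scoped ComplexInnerProductSpace
open ContinuousLinearMap Filter Topology

section DualFixedPoint

variable {𝕜 ι H K : Type*} [RCLike 𝕜] [NormedAddCommGroup H] [InnerProductSpace 𝕜 H]
  [CompleteSpace H] [NormedAddCommGroup K] [InnerProductSpace 𝕜 K]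

/-- `Y` is a fixed point of the map `Φ*(Y) = ∑ₖ Eₖ* Y Eₖ` dual to the one with Kraus operators `E`,
the series converging in the strong operator topology. For `Y = 1` this says that `Φ*` is unital,
i.e. that the map with Kraus operators `E` is trace preserving. -/
def IsDualFixedPoint (E : ι → (H →L[𝕜] H)) (Y : H →L[𝕜] H) : Prop :=
  ∀ x : H, HasSum (fun k => (adjoint (E k) * Y * E k) x) (Y x)

namespace IsDualFixedPoint

variable {E : ι → (H →L[𝕜] H)} {P Y Z : H →L[𝕜] H}

theorem sub (hY : IsDualFixedPoint E Y) (hZ : IsDualFixedPoint E Z) :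
    IsDualFixedPoint E (Y - Z) := fun x => by
  simpa only [mul_sub, sub_mul, sub_apply] using (hY x).sub (hZ x)

theorem hasSum_norm_sq [CompleteSpace K] {S : H →L[𝕜] K}
    (hS : IsDualFixedPoint E (adjoint S ∘L S)) (x : H) :
    HasSum (fun k => ‖S (E k x)‖ ^ 2) (‖S x‖ ^ 2) := by
  have term_eq (k : ι) :
      ‖S (E k x)‖ ^ 2 = RCLike.re (inner 𝕜 x ((adjoint (E k) * (adjoint S ∘L S) * E k) x)) := by
    rw [apply_norm_sq_eq_inner_adjoint_right S, mul_apply_eq_comp, mul_apply_eq_comp,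
      adjoint_inner_right]
  simp only [term_eq, apply_norm_sq_eq_inner_adjoint_right S x]
  exact RCLike.reCLM.hasSum ((innerSL 𝕜 x).hasSum (hS x))

theorem ker_mem_invtSubmodule [CompleteSpace K] {S : H →L[𝕜] K}
    (hS : IsDualFixedPoint E (adjoint S ∘L S)) (k : ι) :
    S.ker ∈ Module.End.invtSubmodule (E k) := by
  intro x (hx : S x = 0)
  have sum_zero : HasSum (fun k => ‖S (E k x)‖ ^ 2) 0 := by simpa [hx] using hS.hasSum_norm_sq x
  have norm_sq_zero : ‖S (E k x)‖ ^ 2 = 0 :=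
    congrFun ((hasSum_zero_iff_of_nonneg fun _ => by positivity).1 sum_zero) k
  simpa using norm_sq_zero

theorem ker_mem_invtSubmodule_of_isStarProjection (hP : IsStarProjection P)
    (hPfix : IsDualFixedPoint E P) (k : ι) : P.ker ∈ Module.End.invtSubmodule (E k) := by
  have adjoint_comp_self : adjoint P ∘L P = P := by
    rw [hP.isSelfAdjoint.adjoint_eq]
    exact hP.isIdempotentElem
  exact ker_mem_invtSubmodule (adjoint_comp_self.symm ▸ hPfix) k

theorem commute_of_isStarProjection (h1 : IsDualFixedPoint E 1) (hP : IsStarProjection P)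
    (hPfix : IsDualFixedPoint E P) (k : ι) : Commute P (E k) := by
  have range_eq_ker : P.range = (1 - P).ker :=
    LinearMap.IsIdempotentElem.range_eq_ker hP.isIdempotentElem.toLinearMap
  refine (IsIdempotentElem.commute_iff hP.isIdempotentElem).2
    ⟨?_, ker_mem_invtSubmodule_of_isStarProjection hP hPfix k⟩
  rw [range_eq_ker]
  exact ker_mem_invtSubmodule_of_isStarProjection hP.one_sub (h1.sub hPfix) k

theorem eq_of_comp_adjoint_eq (h1 : IsDualFixedPoint E 1) {A B : H →L[𝕜] K}
    (hAB : ∀ k, A ∘L adjoint (E k) = B ∘L adjoint (E k)) : A = B := by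
  ext x
  have apply_eq (k : ι) :
      A ((adjoint (E k) * 1 * E k) x) = B ((adjoint (E k) * 1 * E k) x) :=
    congrArg (fun T : H →L[𝕜] K => T (E k x)) (hAB k)
  refine (A.hasSum (h1 x)).unique ?_
  simpa only [Function.comp_def, apply_eq, one_apply_eq_self] using B.hasSum (h1 x)

end IsDualFixedPoint

theorem isDualFixedPoint_one_rankOne {u v : ι → H} (hu : ∀ k, ‖u k‖ = 1)
    (hv : ∀ x : H, HasSum (fun k => inner 𝕜 (v k) x • v k) x) :
    IsDualFixedPoint (fun k => InnerProductSpace.rankOne 𝕜 (u k) (v k)) 1 := fun x => by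
  simpa [hu, inner_self_eq_norm_sq_to_K] using hv x

end DualFixedPoint

section RankOne

variable {𝕜 H : Type*} [RCLike 𝕜] [NormedAddCommGroup H] [InnerProductSpace 𝕜 H]
  {A B : H →L[𝕜] H} {u v : H}

theorem exists_apply_eq_smul_of_commute_rankOne (hv : v ≠ 0)
    (hA : Commute A (InnerProductSpace.rankOne 𝕜 u v)) : ∃ a : 𝕜, A u = a • u := by
  have apply_at_v : inner 𝕜 v v • A u = inner 𝕜 v (A v) • u := by
    simpa using congrArg (fun T : H →L[𝕜] H => T v) hA.eq
  refine ⟨(inner 𝕜 v v)⁻¹ * inner 𝕜 v (A v), ?_⟩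
  rw [mul_smul, ← apply_at_v, inv_smul_smul₀ (inner_self_ne_zero.2 hv)]

theorem mul_comp_rankOne_eq_of_commute (hA : Commute A (InnerProductSpace.rankOne 𝕜 u v))
    (hB : Commute B (InnerProductSpace.rankOne 𝕜 u v)) :
    (A * B) ∘L InnerProductSpace.rankOne 𝕜 u v = (B * A) ∘L InnerProductSpace.rankOne 𝕜 u v := by
  rcases eq_or_ne v 0 with rfl | hv
  · simp
  obtain ⟨a, ha⟩ := exists_apply_eq_smul_of_commute_rankOne hv hA
  obtain ⟨b, hb⟩ := exists_apply_eq_smul_of_commute_rankOne hv hB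
  simp only [InnerProductSpace.comp_rankOne, mul_apply_eq_comp, ha, hb, map_smul, smul_comm a b]

end RankOne

theorem fixed_projections_commute_general
    {𝕜 ι H : Type*} [RCLike 𝕜] [NormedAddCommGroup H] [InnerProductSpace 𝕜 H] [CompleteSpace H]
    {u v : ι → H} {P Q : H →L[𝕜] H} (hP : IsStarProjection P) (hQ : IsStarProjection Q)
    (h1 : IsDualFixedPoint (fun k => InnerProductSpace.rankOne 𝕜 (u k) (v k)) 1)
    (hPfix : IsDualFixedPoint (fun k => InnerProductSpace.rankOne 𝕜 (u k) (v k)) P)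
    (hQfix : IsDualFixedPoint (fun k => InnerProductSpace.rankOne 𝕜 (u k) (v k)) Q) :
    Commute P Q := by
  have commute_adjoint {R : H →L[𝕜] H} (hR : IsStarProjection R)
      (hRfix : IsDualFixedPoint (fun k => InnerProductSpace.rankOne 𝕜 (u k) (v k)) R) (k : ι) :
      Commute R (InnerProductSpace.rankOne 𝕜 (v k) (u k)) := by
    simpa [star_eq_adjoint, hR.isSelfAdjoint.adjoint_eq] using
      (h1.commute_of_isStarProjection hR hRfix k).star_star
  refine h1.eq_of_comp_adjoint_eq fun k => ?_
  rw [InnerProductSpace.adjoint_rankOne]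
  exact mul_comp_rankOne_eq_of_commute (commute_adjoint hP hPfix k) (commute_adjoint hQ hQfix k)

/-- Any two orthogonal projections in the fixed point set of the dual
map `Φ*(Y) = ∑ₖ Eₖ* Y Eₖ` of a channel with rank-one Kraus operators `Eₖ = uₖ vₖ*`
(`‖uₖ‖ = 1`, `∑ₖ vₖ vₖ* = I` in SOT) commute. -/
theorem fixed_projections_commute
    {H : Type*} [NormedAddCommGroup H] [InnerProductSpace ℂ H] [CompleteSpace H]
    [TopologicalSpace.SeparableSpace H]
    (u v : ℕ → H) (hu : ∀ k, ‖u k‖ = 1)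
    (hv : ∀ x : H, HasSum (fun k => ⟪v k, x⟫ • v k) x)
    (E : ℕ → (H →L[ℂ] H)) (hE : ∀ k, E k = rankOne (u k) (v k))
    (P Q : H →L[ℂ] H)
    (hPsa : IsSelfAdjoint P) (hPidem : P * P = P)
    (hQsa : IsSelfAdjoint Q) (hQidem : Q * Q = Q)
    (hPfix : ∀ x : H,
      HasSum (fun k => (ContinuousLinearMap.adjoint (E k) * P * E k) x) (P x))
    (hQfix : ∀ x : H,
      HasSum (fun k => (ContinuousLinearMap.adjoint (E k) * Q * E k) x) (Q x)) :
    P * Q = Q * P := by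
  obtain rfl : E = fun k => InnerProductSpace.rankOne ℂ (u k) (v k) := funext hE
  exact fixed_projections_commute_general ⟨hPidem, hPsa⟩ ⟨hQidem, hQsa⟩
    (isDualFixedPoint_one_rankOne hu hv) hPfix hQfix

end
end

section
/- Let H be a complex separable infinite-dimensional Hilbert space and let N ⊆ T(H) be a trace-norm-closed self-adjoint subspace of trace-zero trace-class operators. Let N^⊥ = {Y ∈ B(H) : Tr(XY) = 0 for all X ∈ N}. Then there exists a sequence {F_k}_{k=1}^∞ of positive operators in N^⊥ with Σ_{k=1}^∞ F_k = I_H (the series converging in operator norm) such that the linear span of {F_k : k ≥ 1} is dense in N^⊥ in the weak* topology of B(H) (the topology induced by the duality with T(H)). -/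
noncomputable section

open scoped ComplexInnerProductSpace
open ContinuousLinearMap Filter Topology

/-!
The annihilator `N^⊥` is a norm-closed operator system: it contains `1` because `N` is trace-zero,
and it is stable under adjoints because `N` is. On norm-bounded sets the weak* topology is detected
by the countably many matrix coefficients along a dense sequence of vectors, so `N^⊥` has a
countable weak*-dense subset. Adding norm multiples of `1` to real and imaginary parts writes its
members as linear combinations of countably many positive elements of `N^⊥`. These are rescaled so
that their sum is at most `1`, and the defect is prepended.

The facts needed about the trace (`Tr (X * Z) = Tr (Z * X)`, continuity of `Z ↦ Tr (X * Z)`) are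
linear in `X`. Since `A⁻ = -A * Q`, with `Q` the projection onto `ker A⁺`, a trace-class operator is
a linear combination of positive ones, so one may take `X = B * B` with `B` Hilbert–Schmidt, where
they are double-sum and dominated-convergence arguments over an orthonormal basis.
-/

section CountableSets

theorem exists_countable_subset_forall_mem_closure_image {α X : Type*} [TopologicalSpace X]
    [SecondCountableTopology X] (φ : α → X) (s : Set α) :
    ∃ t ⊆ s, t.Countable ∧ ∀ y ∈ s, φ y ∈ closure (φ '' t) := by
  let : TopologicalSpace s := .induced (fun y : s => φ y) inferInstance
  have : SecondCountableTopology s := TopologicalSpace.secondCountableTopology_induced _ _ _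
  obtain ⟨t, ht, ht_dense⟩ := TopologicalSpace.exists_countable_dense s
  refine ⟨Subtype.val '' t, Subtype.coe_image_subset s t, ht.image _, fun y hy => ?_⟩
  rw [Set.image_image]
  exact closure_induced.1 (ht_dense ⟨y, hy⟩)

theorem exists_countable_subset_span_of_subset_span {R M : Type*} [Semiring R] [AddCommMonoid M]
    [Module R M] {s t : Set M} (ht : t.Countable) (hts : t ⊆ Submodule.span R s) :
    ∃ u ⊆ s, u.Countable ∧ t ⊆ Submodule.span R u := by
  have hfin : ∀ x ∈ t, ∃ u : Finset M, ↑u ⊆ s ∧ x ∈ Submodule.span R (u : Set M) :=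
    fun x hx => Submodule.mem_span_finite_of_mem_span (hts hx)
  choose! u hus hu using hfin
  refine ⟨⋃ x ∈ t, u x, Set.iUnion₂_subset hus, ht.biUnion fun x _ => (u x).countable_toSet,
    fun x hx => ?_⟩
  exact Submodule.span_mono (Set.subset_biUnion_of_mem hx) (hu x hx)

end CountableSets

section OperatorSystem

theorem exists_pos_summable_norm_smul {ι E : Type*} [Countable ι] [SeminormedAddCommGroup E]
    [NormedSpace ℝ E] (a : ι → E) :
    ∃ c : ι → ℝ, (∀ k, 0 < c k) ∧ (Summable fun k => ‖c k • a k‖) ∧ ∑' k, ‖c k • a k‖ ≤ 1 := by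
  cases nonempty_encodable ι
  obtain ⟨δ, hδ, s, hs, hs_le⟩ := posSumOfEncodable one_pos ι
  have hc : ∀ k, 0 < δ k / (1 + ‖a k‖) := fun k => div_pos (hδ k) (by positivity)
  have hbound : ∀ k, ‖(δ k / (1 + ‖a k‖)) • a k‖ ≤ δ k := fun k => by
    rw [norm_smul, Real.norm_of_nonneg (hc k).le, div_mul_eq_mul_div, div_le_iff₀ (by positivity)]
    exact mul_le_mul_of_nonneg_left (by linarith) (hδ k).le
  have hsummable := Summable.of_nonneg_of_le (fun _ => norm_nonneg _) hbound hs.summable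
  exact ⟨_, hc, hsummable, (hsummable.tsum_le_of_sum_le fun t =>
    (Finset.sum_le_sum fun k _ => hbound k).trans (sum_le_hasSum t (fun k _ => (hδ k).le) hs)).trans
    hs_le⟩

variable {𝓐 : Type*} [CStarAlgebra 𝓐] [PartialOrder 𝓐] [StarOrderedRing 𝓐]

theorem mem_span_nonneg_of_isSelfAdjoint {S : Submodule ℂ 𝓐} (one_mem : 1 ∈ S) {a : 𝓐}
    (ha : IsSelfAdjoint a) (haS : a ∈ S) : a ∈ Submodule.span ℂ {b ∈ S | 0 ≤ b} := by
  have hnorm : algebraMap ℝ 𝓐 ‖a‖ ∈ S := by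
    rw [Algebra.algebraMap_eq_smul_one]
    exact S.smul_of_tower_mem _ one_mem
  rw [← add_sub_cancel_right a (algebraMap ℝ 𝓐 ‖a‖)]
  refine Submodule.sub_mem _ (Submodule.subset_span ⟨S.add_mem haS hnorm, ?_⟩)
    (Submodule.subset_span ⟨hnorm, algebraMap_nonneg 𝓐 (norm_nonneg a)⟩)
  exact neg_le_iff_add_nonneg.1 ha.neg_algebraMap_norm_le_self

theorem le_span_nonneg {S : Submodule ℂ 𝓐} (one_mem : 1 ∈ S) (star_mem : ∀ a ∈ S, star a ∈ S) :
    S ≤ Submodule.span ℂ {b ∈ S | 0 ≤ b} := by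
  intro a ha
  have hre : (realPart a : 𝓐) ∈ S := by
    rw [realPart_apply_coe]
    exact S.smul_of_tower_mem _ (S.add_mem ha (star_mem a ha))
  have him : (imaginaryPart a : 𝓐) ∈ S := by
    rw [imaginaryPart_apply_coe]
    exact S.smul_mem _ (S.smul_of_tower_mem _ (S.sub_mem ha (star_mem a ha)))
  rw [← realPart_add_I_smul_imaginaryPart a]
  exact add_mem (mem_span_nonneg_of_isSelfAdjoint one_mem (realPart a).2 hre)
    (Submodule.smul_mem _ _ (mem_span_nonneg_of_isSelfAdjoint one_mem (imaginaryPart a).2 him))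

theorem exists_nonneg_hasSum_one_of_seq {S : Submodule ℂ 𝓐} (one_mem : 1 ∈ S)
    (hS : IsClosed (S : Set 𝓐)) {P : ℕ → 𝓐} (hP : ∀ k, P k ∈ S) (hP₀ : ∀ k, 0 ≤ P k) :
    ∃ F : ℕ → 𝓐, (∀ k, 0 ≤ F k) ∧ (∀ k, F k ∈ S) ∧ HasSum F 1 ∧
      Set.range P ⊆ Submodule.span ℂ (Set.range F) := by
  obtain ⟨c, hc, hsummable, hle⟩ := exists_pos_summable_norm_smul P
  have hG₀ : ∀ k, 0 ≤ c k • P k := fun k => smul_nonneg (hc k).le (hP₀ k)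
  have hGS : ∀ k, c k • P k ∈ S := fun k => S.smul_of_tower_mem _ (hP k)
  have hsum_le : ∑' k, c k • P k ≤ 1 :=
    (CStarAlgebra.norm_le_one_iff_of_nonneg _ (tsum_nonneg hG₀)).1
      ((norm_tsum_le_tsum_norm hsummable).trans hle)
  have hsum_mem : ∑' k, c k • P k ∈ S :=
    hS.mem_of_tendsto hsummable.of_norm.hasSum
      (Eventually.of_forall fun _ => S.sum_mem fun k _ => hGS k)
  let F : ℕ → 𝓐
    | 0 => 1 - ∑' k, c k • P k
    | k + 1 => c k • P k
  refine ⟨F, ?_, ?_, ?_, ?_⟩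
  · rintro (_ | k)
    exacts [sub_nonneg.2 hsum_le, hG₀ k]
  · rintro (_ | k)
    exacts [S.sub_mem one_mem hsum_mem, hGS k]
  · rw [← hasSum_nat_add_iff' 1]
    simpa [F] using hsummable.of_norm.hasSum
  · rintro _ ⟨k, rfl⟩
    rw [← inv_smul_smul₀ (hc k).ne' (P k)]
    exact Submodule.smul_of_tower_mem _ _ (Submodule.subset_span ⟨k + 1, rfl⟩)

theorem exists_nonneg_hasSum_one_of_countable {S : Submodule ℂ 𝓐} (one_mem : 1 ∈ S)
    (star_mem : ∀ a ∈ S, star a ∈ S) (hS : IsClosed (S : Set 𝓐)) {T : Set 𝓐}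
    (hT : T.Countable) (hTS : T ⊆ S) :
    ∃ F : ℕ → 𝓐, (∀ k, 0 ≤ F k) ∧ (∀ k, F k ∈ S) ∧ HasSum F 1 ∧
      T ⊆ Submodule.span ℂ (Set.range F) := by
  obtain ⟨Q, hQS, hQ, hTQ⟩ :=
    exists_countable_subset_span_of_subset_span hT (hTS.trans (le_span_nonneg one_mem star_mem))
  obtain ⟨P, hP⟩ := (hQ.insert 0).exists_eq_range (Set.insert_nonempty 0 Q)
  have hPS : Set.range P ⊆ {b ∈ S | 0 ≤ b} :=
    hP.symm.subset.trans (Set.insert_subset ⟨S.zero_mem, le_rfl⟩ hQS)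
  obtain ⟨F, hF₀, hFS, hF, hPF⟩ :=
    exists_nonneg_hasSum_one_of_seq one_mem hS
    (fun k => (hPS (Set.mem_range_self k)).1) fun k => (hPS (Set.mem_range_self k)).2
  have hQF : Q ⊆ Submodule.span ℂ (Set.range F) :=
    (Set.subset_insert 0 Q).trans (hP.subset.trans hPF)
  exact ⟨F, hF₀, hFS, hF, hTQ.trans (Submodule.span_le.2 hQF)⟩

end OperatorSystem

section HilbertSchmidt

variable {𝕜 H K ι κ : Type*} [RCLike 𝕜] [NormedAddCommGroup H] [InnerProductSpace 𝕜 H]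
  [NormedAddCommGroup K] [InnerProductSpace 𝕜 K]

theorem hasSum_sq_norm_inner (e : HilbertBasis ι 𝕜 H) (x : H) :
    HasSum (fun i => ‖inner 𝕜 (e i) x‖ ^ 2) (‖x‖ ^ 2) := by
  have h := RCLike.hasSum_re 𝕜 (e.hasSum_inner_mul_inner x x)
  simpa only [inner_mul_symm_re_eq_norm, norm_mul, norm_inner_symm x, ← sq,
    inner_self_eq_norm_sq] using h

/-- `T` is a Hilbert–Schmidt operator, as tested on the Hilbert basis `e`. By
`IsHilbertSchmidt.adjoint`, applied twice, this does not depend on the choice of `e`. -/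
def IsHilbertSchmidt (e : HilbertBasis ι 𝕜 H) (T : H →L[𝕜] K) : Prop :=
  Summable fun i => ‖T (e i)‖ ^ 2

theorem isHilbertSchmidt_iff_summable_inner (e : HilbertBasis ι 𝕜 H) (f : HilbertBasis κ 𝕜 K)
    (T : H →L[𝕜] K) :
    IsHilbertSchmidt e T ↔ Summable fun p : ι × κ => ‖inner 𝕜 (f p.2) (T (e p.1))‖ ^ 2 := by
  rw [summable_prod_of_nonneg (fun _ => sq_nonneg _)]
  simp only [IsHilbertSchmidt, (hasSum_sq_norm_inner f _).tsum_eq,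
    fun x => (hasSum_sq_norm_inner f x).summable, implies_true, true_and]

namespace IsHilbertSchmidt

variable {e : HilbertBasis ι 𝕜 H} {f : HilbertBasis κ 𝕜 K}

theorem mul_left {T : H →L[𝕜] H} (hT : IsHilbertSchmidt e T) (Z : H →L[𝕜] H) :
    IsHilbertSchmidt e (Z * T) := by
  refine Summable.of_nonneg_of_le (fun _ => sq_nonneg _) (fun i => ?_) 
    (Summable.mul_left (‖Z‖ ^ 2) hT)
  rw [← mul_pow]
  exact pow_le_pow_left₀ (norm_nonneg _) (Z.le_opNorm _) 2

variable [CompleteSpace H] [CompleteSpace K]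

theorem adjoint {T : H →L[𝕜] K} (hT : IsHilbertSchmidt e T) (f : HilbertBasis κ 𝕜 K) :
    IsHilbertSchmidt f (adjoint T) := by
  rw [isHilbertSchmidt_iff_summable_inner f e]
  refine ((isHilbertSchmidt_iff_summable_inner e f T).1 hT).prod_symm.congr fun p => ?_
  rw [adjoint_inner_right, norm_inner_symm, Prod.fst_swap, Prod.snd_swap]

theorem mul_right {T : H →L[𝕜] H} (hT : IsHilbertSchmidt e T) (Z : H →L[𝕜] H) :
    IsHilbertSchmidt e (T * Z) := by
  simpa only [← star_eq_adjoint, star_mul, star_star] using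
    ((hT.adjoint e).mul_left (star Z)).adjoint e

theorem tsum_inner_comp_comm {S : K →L[𝕜] H} {T : H →L[𝕜] K} (hS : IsHilbertSchmidt f S)
    (hT : IsHilbertSchmidt e T) :
    ∑' i, inner 𝕜 (e i) (S (T (e i))) = ∑' j, inner 𝕜 (f j) (T (S (f j))) := by
  have hsummable : Summable (Function.uncurry fun i j =>
      inner 𝕜 (e i) (S (f j)) * inner 𝕜 (f j) (T (e i))) := by
    refine Summable.of_norm_bounded
      (((isHilbertSchmidt_iff_summable_inner f e S).1 hS).prod_symm.add
        ((isHilbertSchmidt_iff_summable_inner e f T).1 hT)) fun ⟨i, j⟩ => ?_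
    rw [Function.uncurry_apply_pair, norm_mul, Prod.fst_swap, Prod.snd_swap]
    have h := two_mul_le_add_sq ‖inner 𝕜 (e i) (S (f j))‖ ‖inner 𝕜 (f j) (T (e i))‖
    nlinarith [norm_nonneg (inner 𝕜 (e i) (S (f j))),
      norm_nonneg (inner 𝕜 (f j) (T (e i)))]
  calc ∑' i, inner 𝕜 (e i) (S (T (e i)))
      = ∑' i, ∑' j, inner 𝕜 (e i) (S (f j)) * inner 𝕜 (f j) (T (e i)) := by
        simp_rw [← adjoint_inner_left S, f.tsum_inner_mul_inner]
    _ = ∑' j, ∑' i, inner 𝕜 (e i) (S (f j)) * inner 𝕜 (f j) (T (e i)) :=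
        hsummable.tsum_comm.symm
    _ = ∑' j, inner 𝕜 (f j) (T (S (f j))) := tsum_congr fun j => by
        simp_rw [← adjoint_inner_left T]
        rw [← e.tsum_inner_mul_inner]
        exact tsum_congr fun i => mul_comm _ _

end IsHilbertSchmidt

end HilbertSchmidt

section TraceClass

variable {H K : Type*} [NormedAddCommGroup H] [InnerProductSpace ℂ H]
  [NormedAddCommGroup K] [InnerProductSpace ℂ K]

variable (H K) in
/-- The trace-class operators as a linear subspace of the bounded operators. -/
def traceClass : Submodule ℂ (H →L[ℂ] K) where
  carrier := {T | IsTraceClass T}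
  zero_mem' := ⟨0, fun n e f _ _ => by simp⟩
  add_mem' := by
    rintro S T ⟨C, hC⟩ ⟨D, hD⟩
    refine ⟨C + D, fun n e f he hf => ?_⟩
    calc ∑ i, ‖⟪f i, (S + T) (e i)⟫‖
        ≤ ∑ i, (‖⟪f i, S (e i)⟫‖ + ‖⟪f i, T (e i)⟫‖) :=
          Finset.sum_le_sum fun i _ => by
            rw [add_apply, inner_add_right]
            exact norm_add_le _ _
      _ ≤ C + D := by
          rw [Finset.sum_add_distrib]
          exact add_le_add (hC n e f he hf) (hD n e f he hf)
  smul_mem' := by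
    rintro c T ⟨C, hC⟩
    refine ⟨‖c‖ * C, fun n e f he hf => ?_⟩
    simp only [smul_apply, inner_smul_right, norm_mul, ← Finset.mul_sum]
    exact mul_le_mul_of_nonneg_left (hC n e f he hf) (norm_nonneg c)

namespace IsTraceClass

theorem summable_norm_inner {ι : Type*} {T : H →L[ℂ] K} (hT : IsTraceClass T) {e : ι → H}
    {f : ι → K} (he : Orthonormal ℂ e) (hf : Orthonormal ℂ f) :
    Summable fun i => ‖⟪f i, T (e i)⟫‖ := by
  obtain ⟨C, hC⟩ := hT
  refine summable_of_sum_le (c := C) (fun _ => norm_nonneg _) fun s => ?_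
  let g : Fin s.card → ι := fun k => s.equivFin.symm k
  have hg : Function.Injective g := Subtype.val_injective.comp s.equivFin.symm.injective
  calc ∑ i ∈ s, ‖⟪f i, T (e i)⟫‖ = ∑ k, ‖⟪f (g k), T (e (g k))⟫‖ := by
        rw [← Finset.sum_coe_sort s, ← s.equivFin.symm.sum_comp]
    _ ≤ C := hC _ _ _ (he.comp g hg) (hf.comp g hg)

variable [CompleteSpace H] [CompleteSpace K]

theorem adjoint {T : H →L[ℂ] K} (hT : IsTraceClass T) : IsTraceClass (adjoint T) := by
  obtain ⟨C, hC⟩ := hT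
  refine ⟨C, fun n e f he hf => ?_⟩
  simpa only [adjoint_inner_right, norm_inner_symm] using hC n f e hf he

theorem mul_unitary {X : H →L[ℂ] H} (hX : IsTraceClass X) (u : unitary (H →L[ℂ] H)) :
    IsTraceClass (X * (u : H →L[ℂ] H)) := by
  obtain ⟨C, hC⟩ := hX
  refine ⟨C, fun n e f he hf => hC n (fun i => (u : H →L[ℂ] H) (e i)) f ?_ hf⟩
  exact he.comp_linearIsometry (Unitary.linearIsometryEquiv u).toLinearIsometry

-- Every bounded operator is a linear combination of unitaries.
theorem mul_right {X : H →L[ℂ] H} (hX : IsTraceClass X) (Z : H →L[ℂ] H) :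
    IsTraceClass (X * Z) := by
  have hspan : Submodule.span ℂ (unitary (H →L[ℂ] H) : Set (H →L[ℂ] H)) ≤
      (traceClass H H).comap (LinearMap.mulLeft ℂ X) :=
    Submodule.span_le.2 fun u hu => hX.mul_unitary ⟨u, hu⟩
  rw [CStarAlgebra.span_unitary] at hspan
  exact hspan Submodule.mem_top

theorem mul_left {X : H →L[ℂ] H} (hX : IsTraceClass X) (Z : H →L[ℂ] H) :
    IsTraceClass (Z * X) := by
  simpa only [← star_eq_adjoint, star_mul, star_star] using (hX.adjoint.mul_right (star Z)).adjoint

end IsTraceClass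

section PositiveParts

variable [CompleteSpace H]

theorem mul_starProjection_ker_posPart {A : H →L[ℂ] H} (hA : IsSelfAdjoint A) :
    A * (A⁺).ker.starProjection = -A⁻ := by
  set Q := (A⁺).ker.starProjection
  have hpos : A⁺ * Q = 0 := by
    ext x
    exact Submodule.starProjection_apply_mem (A⁺).ker x
  have hneg : Q * A⁻ = A⁻ := by
    ext x
    refine Submodule.starProjection_eq_self_iff.2 ?_
    exact DFunLike.congr_fun (CFC.posPart_mul_negPart A) x
  have hneg' : A⁻ * Q = A⁻ := by
    have hQ : IsSelfAdjoint Q := isSelfAdjoint_starProjection _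
    have hA' : IsSelfAdjoint A⁻ := .of_nonneg (CFC.negPart_nonneg A)
    simpa only [star_mul, hQ.star_eq, hA'.star_eq] using congrArg star hneg
  calc A * Q = (A⁺ - A⁻) * Q := by rw [CFC.posPart_sub_negPart A hA]
    _ = -A⁻ := by rw [sub_mul, hpos, hneg', zero_sub]

namespace IsTraceClass

theorem negPart {A : H →L[ℂ] H} (hA : IsTraceClass A) (hA_sa : IsSelfAdjoint A) :
    IsTraceClass A⁻ := by
  rw [← neg_neg A⁻, ← mul_starProjection_ker_posPart hA_sa]
  exact (traceClass H H).neg_mem (hA.mul_right _)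

theorem posPart {A : H →L[ℂ] H} (hA : IsTraceClass A) (hA_sa : IsSelfAdjoint A) :
    IsTraceClass A⁺ := by
  rw [← CFC.negPart_neg]
  exact negPart ((traceClass H H).neg_mem hA) hA_sa.neg

theorem mem_span_nonneg {X : H →L[ℂ] H} (hX : IsTraceClass X) :
    X ∈ Submodule.span ℂ {A : H →L[ℂ] H | 0 ≤ A ∧ IsTraceClass A} := by
  have hstar : IsTraceClass (star X) := hX.adjoint
  have hre : IsTraceClass (realPart X : H →L[ℂ] H) := by
    rw [realPart_apply_coe]
    exact (traceClass H H).smul_of_tower_mem _ ((traceClass H H).add_mem hX hstar)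
  have him : IsTraceClass (imaginaryPart X : H →L[ℂ] H) := by
    rw [imaginaryPart_apply_coe]
    exact (traceClass H H).smul_mem _
      ((traceClass H H).smul_of_tower_mem _ ((traceClass H H).sub_mem hX hstar))
  rw [← CStarAlgebra.linear_combination_nonneg X]
  refine add_mem (sub_mem ?_ ?_) (sub_mem (Submodule.smul_mem _ _ ?_) (Submodule.smul_mem _ _ ?_))
  · exact Submodule.subset_span ⟨CFC.posPart_nonneg _, hre.posPart (realPart X).2⟩
  · exact Submodule.subset_span ⟨CFC.negPart_nonneg _, hre.negPart (realPart X).2⟩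
  · exact Submodule.subset_span ⟨CFC.posPart_nonneg _, him.posPart (imaginaryPart X).2⟩
  · exact Submodule.subset_span ⟨CFC.negPart_nonneg _, him.negPart (imaginaryPart X).2⟩

theorem induction_nonneg {p : (H →L[ℂ] H) → Prop}
    (nonneg : ∀ A, 0 ≤ A → IsTraceClass A → p A)
    (add : ∀ X Y, IsTraceClass X → IsTraceClass Y → p X → p Y → p (X + Y))
    (smul : ∀ (c : ℂ) (X), IsTraceClass X → p X → p (c • X))
    {X : H →L[ℂ] H} (hX : IsTraceClass X) : p X := by
  have hle : Submodule.span ℂ {A : H →L[ℂ] H | 0 ≤ A ∧ IsTraceClass A} ≤ traceClass H H :=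
    Submodule.span_le.2 fun A hA => hA.2
  refine Submodule.span_induction (p := fun X _ => p X) (fun A hA => nonneg A hA.1 hA.2)
    (nonneg 0 le_rfl (traceClass H H).zero_mem) ?_ ?_ hX.mem_span_nonneg
  · exact fun X Y hX hY => add X Y (hle hX) (hle hY)
  · exact fun c X hX => smul c X (hle hX)

end IsTraceClass

end PositiveParts

end TraceClass

section Trace

variable {H : Type*} [NormedAddCommGroup H] [InnerProductSpace ℂ H] [CompleteSpace H]

theorem tr_star (X : H →L[ℂ] H) : Tr (star X) = star (Tr X) := by
  rw [Tr, Tr, tsum_star]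
  exact tsum_congr fun i => by
    rw [star_eq_adjoint, adjoint_inner_right, RCLike.star_def, inner_conj_symm]

theorem tr_smul (c : ℂ) (X : H →L[ℂ] H) : Tr (c • X) = c * Tr X := by
  simp only [Tr, smul_apply, inner_smul_right, tsum_mul_left]

theorem IsHilbertSchmidt.tr_mul_comm {S T : H →L[ℂ] H} (hS : IsHilbertSchmidt (stdONB H) S)
    (hT : IsHilbertSchmidt (stdONB H) T) : Tr (S * T) = Tr (T * S) :=
  hS.tsum_inner_comp_comm hT

namespace IsTraceClass

variable {X : H →L[ℂ] H}

theorem summable_inner_stdONB (hX : IsTraceClass X) :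
    Summable fun i => ⟪stdONB H i, X (stdONB H i)⟫ :=
  (hX.summable_norm_inner (stdONB H).orthonormal (stdONB H).orthonormal).of_norm

theorem tr_add {Y : H →L[ℂ] H} (hX : IsTraceClass X) (hY : IsTraceClass Y) :
    Tr (X + Y) = Tr X + Tr Y := by
  simp only [Tr, add_apply, inner_add_right]
  exact hX.summable_inner_stdONB.tsum_add hY.summable_inner_stdONB

theorem isHilbertSchmidt_sqrt {ι : Type*} {A : H →L[ℂ] H} (hA : IsTraceClass A) (hA₀ : 0 ≤ A)
    (e : HilbertBasis ι ℂ H) : IsHilbertSchmidt e (CFC.sqrt A) := by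
  have hsqrt : IsSelfAdjoint (CFC.sqrt A) := .of_nonneg (CFC.sqrt_nonneg A)
  refine (hA.summable_norm_inner e.orthonormal e.orthonormal).congr fun i => ?_
  nth_rw 1 [← CFC.sqrt_mul_sqrt_self A]
  rw [mul_apply_eq_comp, ← adjoint_inner_left, hsqrt.adjoint_eq, inner_self_eq_norm_sq_to_K,
    norm_pow, RCLike.norm_ofReal, abs_norm]

theorem tr_mul_comm (hX : IsTraceClass X) (Z : H →L[ℂ] H) : Tr (X * Z) = Tr (Z * X) := by
  refine hX.induction_nonneg (p := fun X => Tr (X * Z) = Tr (Z * X)) ?_ ?_ ?_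
  · intro A hA₀ hA
    have hB := hA.isHilbertSchmidt_sqrt hA₀ (stdONB H)
    set B := CFC.sqrt A
    calc Tr (A * Z) = Tr (B * (B * Z)) := by rw [← mul_assoc, CFC.sqrt_mul_sqrt_self A]
      _ = Tr (B * (Z * B)) := by rw [hB.tr_mul_comm (hB.mul_right Z), mul_assoc]
      _ = Tr (Z * B * B) := hB.tr_mul_comm (hB.mul_left Z)
      _ = Tr (Z * A) := by rw [mul_assoc, CFC.sqrt_mul_sqrt_self A]
  · intro X Y hX hY hXZ hYZ
    rw [add_mul, mul_add, (hX.mul_right Z).tr_add (hY.mul_right Z), hXZ, hYZ,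
      (hX.mul_left Z).tr_add (hY.mul_left Z)]
  · intro c X _ hXZ
    rw [smul_mul_assoc, mul_smul_comm, tr_smul, tr_smul, hXZ]

theorem tr_mul_eq_tsum_inner_sqrt {A : H →L[ℂ] H} (hA : IsTraceClass A) (hA₀ : 0 ≤ A)
    (Z : H →L[ℂ] H) :
    Tr (A * Z) = ∑' i, ⟪CFC.sqrt A (stdONB H i), Z (CFC.sqrt A (stdONB H i))⟫ := by
  have hB := hA.isHilbertSchmidt_sqrt hA₀ (stdONB H)
  have hsqrt : IsSelfAdjoint (CFC.sqrt A) := .of_nonneg (CFC.sqrt_nonneg A)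
  nth_rw 1 [← CFC.sqrt_mul_sqrt_self A]
  rw [mul_assoc, hB.tr_mul_comm (hB.mul_right Z), Tr]
  exact tsum_congr fun i => by
    rw [mul_assoc, mul_apply_eq_comp, ← adjoint_inner_left, hsqrt.adjoint_eq, mul_apply_eq_comp]

theorem tendsto_tr_mul {α : Type*} {l : Filter α} {Z : α → H →L[ℂ] H} {Y : H →L[ℂ] H} {C : ℝ}
    (hX : IsTraceClass X) (hZ : ∀ᶠ a in l, ‖Z a‖ ≤ C)
    (hZY : ∀ x y, Tendsto (fun a => ⟪x, Z a y⟫) l (𝓝 ⟪x, Y y⟫)) :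
    Tendsto (fun a => Tr (X * Z a)) l (𝓝 (Tr (X * Y))) := by
  refine hX.induction_nonneg
    (p := fun X => Tendsto (fun a => Tr (X * Z a)) l (𝓝 (Tr (X * Y)))) ?_ ?_ ?_
  · intro A hA₀ hA
    simp only [hA.tr_mul_eq_tsum_inner_sqrt hA₀]
    refine tendsto_tsum_of_dominated_convergence
      (Summable.mul_left C (hA.isHilbertSchmidt_sqrt hA₀ (stdONB H))) (fun i => hZY _ _)
      (hZ.mono fun a ha i => ?_)
    set x := CFC.sqrt A (stdONB H i)
    calc ‖⟪x, Z a x⟫‖ ≤ ‖x‖ * ‖Z a x‖ := norm_inner_le_norm _ _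
      _ ≤ ‖x‖ * (C * ‖x‖) := by
          gcongr
          exact (Z a).le_of_opNorm_le ha x
      _ = C * ‖x‖ ^ 2 := by ring
  · intro X X' hX hX' h h'
    simpa only [add_mul, (hX.mul_right _).tr_add (hX'.mul_right _)] using h.add h'
  · intro c X _ h
    simpa only [smul_mul_assoc, tr_smul] using h.const_mul c

theorem continuous_tr_mul (hX : IsTraceClass X) :
    Continuous fun Y : H →L[ℂ] H => Tr (X * Y) := by
  refine continuous_iff_continuousAt.2 fun Y => hX.tendsto_tr_mul (C := ‖Y‖ + 1) ?_ fun x y => ?_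
  · exact (continuous_norm.tendsto Y).eventually_le_const (lt_add_one ‖Y‖)
  · exact Continuous.tendsto (by fun_prop) Y

end IsTraceClass

end Trace

section WeakStarTopology

theorem tendsto_apply_of_denseRange {𝕜 E F α ι : Type*} [NontriviallyNormedField 𝕜]
    [SeminormedAddCommGroup E] [NormedSpace 𝕜 E] [SeminormedAddCommGroup F] [NormedSpace 𝕜 F]
    {l : Filter α} {Z : α → E →L[𝕜] F} {Y : E →L[𝕜] F} {C : ℝ} {D : ι → E}
    (hZ : ∀ a, ‖Z a‖ ≤ C) (hD : DenseRange D)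
    (hZY : ∀ i, Tendsto (fun a => Z a (D i)) l (𝓝 (Y (D i)))) (x : E) :
    Tendsto (fun a => Z a x) l (𝓝 (Y x)) := by
  have hbounded : ∃ C, ∀ a, ‖Z a‖ ≤ C := ⟨C, hZ⟩
  have hequi : Equicontinuous fun a => (Z a : E → F) :=
    ((NormedSpace.equicontinuous_TFAE Z).out 5 1).1 hbounded
  exact isClosed_property hD (hequi.isClosed_setOfPred_tendsto Y.continuous) hZY x

variable {H : Type*} [NormedAddCommGroup H] [InnerProductSpace ℂ H]

theorem tendsto_inner_of_denseRange {α ι : Type*} {l : Filter α} {Z : α → H →L[ℂ] H}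
    {Y : H →L[ℂ] H} {C : ℝ} {D : ι → H} (hZ : ∀ a, ‖Z a‖ ≤ C) (hD : DenseRange D)
    (hZY : ∀ i j, Tendsto (fun a => ⟪D i, Z a (D j)⟫) l (𝓝 ⟪D i, Y (D j)⟫)) (x y : H) :
    Tendsto (fun a => ⟪x, Z a y⟫) l (𝓝 ⟪x, Y y⟫) := by
  have hD_left : ∀ i, Tendsto (fun a => ⟪D i, Z a y⟫) l (𝓝 ⟪D i, Y y⟫) := fun i =>
    tendsto_apply_of_denseRange (Z := fun a => innerSL ℂ (D i) ∘L Z a)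
      (Y := innerSL ℂ (D i) ∘L Y) (C := ‖D i‖ * C)
      (fun a => (opNorm_comp_le _ _).trans <| by
        rw [innerSL_apply_norm]
        exact mul_le_mul_of_nonneg_left (hZ a) (norm_nonneg _))
      hD (hZY i) y
  have hswap : Tendsto (fun a => ⟪Z a y, x⟫) l (𝓝 ⟪Y y, x⟫) :=
    tendsto_apply_of_denseRange (Z := fun a => innerSL ℂ (Z a y)) (Y := innerSL ℂ (Y y))
      (C := C * ‖y‖) (fun a => by
        rw [innerSL_apply_norm]
        exact (Z a).le_of_opNorm_le (hZ a) y)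
      hD (fun i => by
        simpa only [RCLike.star_def, inner_conj_symm, innerSL_apply_apply] using (hD_left i).star) x
  simpa only [RCLike.star_def, inner_conj_symm] using hswap.star

/-- The matrix of the operator `Y` with respect to a family `D` of vectors, indexed by pairs so
that matrices carry the product topology. For dense `D` it detects weak* convergence of bounded
sequences. -/
def matrixCoeff {ι : Type*} (D : ι → H) (Y : H →L[ℂ] H) : ι × ι → ℂ :=
  fun p => ⟪D p.1, Y (D p.2)⟫

variable [CompleteSpace H]

theorem mem_closure_weakStar_of_matrixCoeff {ι : Type*} [Countable ι] {D : ι → H}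
    (hD : DenseRange D) {T : Set (H →L[ℂ] H)} {C : ℝ} (hT : ∀ Z ∈ T, ‖Z‖ ≤ C) {Y : H →L[ℂ] H}
    (hY : matrixCoeff D Y ∈ closure (matrixCoeff D '' T)) :
    Y ∈ @closure _ (weakStarTopology H) T := by
  obtain ⟨u, huT, huY⟩ := mem_closure_iff_seq_limit.1 hY
  choose Z hZT hZu using huT
  obtain rfl : (fun n => matrixCoeff D (Z n)) = u := funext hZu
  have hZY : ∀ x y, Tendsto (fun n => ⟪x, Z n y⟫) atTop (𝓝 ⟪x, Y y⟫) :=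
    tendsto_inner_of_denseRange (fun n => hT _ (hZT n)) hD
      fun i j => tendsto_pi_nhds.1 huY (i, j)
  refine closure_induced.2 (mem_closure_of_tendsto (tendsto_pi_nhds.2 fun X =>
    X.2.tendsto_tr_mul (.of_forall fun n => hT _ (hZT n)) hZY) ?_)
  exact .of_forall fun n => Set.mem_image_of_mem _ (hZT n)

theorem exists_countable_weakStar_dense_subset [TopologicalSpace.SeparableSpace H]
    (S : Set (H →L[ℂ] H)) :
    ∃ T ⊆ S, T.Countable ∧ S ⊆ @closure _ (weakStarTopology H) T := by
  have hball : ∀ n : ℕ, ∃ T ⊆ {Y ∈ S | ‖Y‖ ≤ n}, T.Countable ∧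
      {Y ∈ S | ‖Y‖ ≤ n} ⊆ @closure _ (weakStarTopology H) T := by
    intro n
    obtain ⟨T, hTS, hT, hST⟩ := exists_countable_subset_forall_mem_closure_image
      (matrixCoeff (TopologicalSpace.denseSeq H)) {Y ∈ S | ‖Y‖ ≤ n}
    exact ⟨T, hTS, hT, fun Y hY => mem_closure_weakStar_of_matrixCoeff
      (TopologicalSpace.denseRange_denseSeq H) (fun Z hZ => (hTS hZ).2) (hST Y hY)⟩
  choose T hTS hT hST using hball
  refine ⟨⋃ n, T n, Set.iUnion_subset fun n Z hZ => (hTS n hZ).1, Set.countable_iUnion hT,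
    fun Y hY => ?_⟩
  obtain ⟨n, hn⟩ := exists_nat_ge ‖Y‖
  exact (@closure_mono _ (weakStarTopology H) _ _ (Set.subset_iUnion T n)) (hST n ⟨hY, hn⟩)

end WeakStarTopology

section Annihilator

variable {H : Type*} [NormedAddCommGroup H] [InnerProductSpace ℂ H] [CompleteSpace H]

/-- The annihilator `N^⊥` of a set `N` of trace-class operators under the trace pairing
`(X, Y) ↦ Tr (X * Y)`. The pairing is additive in `Y` because the members of `N` are trace
class. -/
def traceAnnihilator (N : Set (H →L[ℂ] H)) (hN : ∀ X ∈ N, IsTraceClass X) :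
    Submodule ℂ (H →L[ℂ] H) where
  carrier := {Y | ∀ X ∈ N, Tr (X * Y) = 0}
  zero_mem' X _ := by rw [mul_zero, ← zero_smul ℂ (0 : H →L[ℂ] H), tr_smul, zero_mul]
  add_mem' {Y Z} hY hZ X hX := by
    rw [mul_add, ((hN X hX).mul_right Y).tr_add ((hN X hX).mul_right Z), hY X hX, hZ X hX, add_zero]
  smul_mem' c Y hY X hX := by rw [mul_smul_comm, tr_smul, hY X hX, mul_zero]

namespace traceAnnihilator

variable {N : Set (H →L[ℂ] H)} (hN : ∀ X ∈ N, IsTraceClass X)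

theorem one_mem (hN_tr : ∀ X ∈ N, Tr X = 0) : 1 ∈ traceAnnihilator N hN := fun X hX => by
  rw [mul_one, hN_tr X hX]

theorem star_mem (hN_star : ∀ X ∈ N, star X ∈ N) {Y : H →L[ℂ] H}
    (hY : Y ∈ traceAnnihilator N hN) : star Y ∈ traceAnnihilator N hN := fun X hX => by
  rw [(hN X hX).tr_mul_comm, ← star_star X, ← star_mul, tr_star, hY _ (hN_star X hX), star_zero]

theorem isClosed : IsClosed (traceAnnihilator N hN : Set (H →L[ℂ] H)) := by
  have hcarrier : (traceAnnihilator N hN : Set (H →L[ℂ] H)) =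
      ⋂ X ∈ N, {Y | Tr (X * Y) = 0} := Set.ext fun _ => by
    rw [Set.mem_iInter₂]
    rfl
  rw [hcarrier]
  exact isClosed_biInter fun X hX => isClosed_eq (hN X hX).continuous_tr_mul continuous_const

end traceAnnihilator

end Annihilator

theorem annihilator_weakStar_dense_positive_decomposition_general
    {H : Type*} [NormedAddCommGroup H] [InnerProductSpace ℂ H] [CompleteSpace H]
    [TopologicalSpace.SeparableSpace H] (N : Set (H →L[ℂ] H))
    (hN_tc : ∀ X ∈ N, IsTraceClass X)
    (hN_tr0 : ∀ X ∈ N, Tr X = 0)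
    (hN_sa : ∀ X ∈ N, ContinuousLinearMap.adjoint X ∈ N) :
    ∃ F : ℕ → (H →L[ℂ] H),
      (∀ k, (F k).IsPositive) ∧
      (∀ k, ∀ X ∈ N, Tr (X * F k) = 0) ∧
      HasSum F 1 ∧
      ∀ Y : H →L[ℂ] H, (∀ X ∈ N, Tr (X * Y) = 0) →
        Y ∈ @closure _ (weakStarTopology H)
          ((Submodule.span ℂ (Set.range F) : Submodule ℂ (H →L[ℂ] H)) :
            Set (H →L[ℂ] H)) := by
  obtain ⟨T, hTN, hT, hNT⟩ :=
    exists_countable_weakStar_dense_subset (traceAnnihilator N hN_tc : Set (H →L[ℂ] H))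
  obtain ⟨F, hF₀, hFN, hF, hTF⟩ := exists_nonneg_hasSum_one_of_countable
    (traceAnnihilator.one_mem hN_tc hN_tr0)
    (fun _ => traceAnnihilator.star_mem hN_tc hN_sa) (traceAnnihilator.isClosed hN_tc) hT hTN
  exact ⟨F, fun k => (nonneg_iff_isPositive _).1 (hF₀ k), hFN, hF,
    fun Y hY => (@closure_mono _ (weakStarTopology H) _ _ hTF) (hNT hY)⟩

/-- For a trace-norm-closed self-adjoint subspace `N` of trace-zero
trace-class operators on a separable infinite-dimensional Hilbert space, there is a
sequence of positive operators `Fₖ` in the annihilator `N^⊥` with `∑ₖ Fₖ = I`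
(converging in operator norm) whose linear span is weak*-dense in `N^⊥`. -/
theorem annihilator_weakStar_dense_positive_decomposition
    {H : Type*} [NormedAddCommGroup H] [InnerProductSpace ℂ H] [CompleteSpace H]
    [TopologicalSpace.SeparableSpace H] (hinf : ¬ FiniteDimensional ℂ H)
    (N : Submodule ℂ (H →L[ℂ] H))
    (hN_tc : ∀ X ∈ N, IsTraceClass X)
    (hN_tr0 : ∀ X ∈ N, Tr X = 0)
    (hN_sa : ∀ X ∈ N, ContinuousLinearMap.adjoint X ∈ N)
    (hN_closed : ∀ X : H →L[ℂ] H, IsTraceClass X →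
      (∀ ε : ℝ, 0 < ε → ∃ Y ∈ N, traceNorm (X - Y) < ε) → X ∈ N) :
    ∃ F : ℕ → (H →L[ℂ] H),
      (∀ k, (F k).IsPositive) ∧
      (∀ k, ∀ X ∈ N, Tr (X * F k) = 0) ∧
      HasSum F 1 ∧
      ∀ Y : H →L[ℂ] H, (∀ X ∈ N, Tr (X * Y) = 0) →
        Y ∈ @closure _ (weakStarTopology H)
          ((Submodule.span ℂ (Set.range F) : Submodule ℂ (H →L[ℂ] H)) :
            Set (H →L[ℂ] H)) := by
  exact annihilator_weakStar_dense_positive_decomposition_general (N : Set (H →L[ℂ] H))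
    hN_tc hN_tr0 hN_sa

end
end

section
/- Let H be a complex separable Hilbert space and let Φ: T(H) → T(H) be a quantum channel (completely positive and trace-preserving) with dual map Φ*: B(H) → B(H). If A belongs to the multiplicative domain M_Φ of Φ, then (Φ* ∘ Φ)(A) = A. -/
noncomputable section

open scoped ComplexInnerProductSpace
open ContinuousLinearMap Filter Topology

/- Trace preservation and multiplicativity give
`Tr (X * Φ*(Φ A)) = Tr (Φ X * Φ A) = Tr (Φ (X * A)) = Tr (X * A)`,
and taking `X = u v*` compares the matrix coefficients of `Φ*(Φ A)` and `A`. For such `X` the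
product `X * A = u (A* v)*` again has rank one, which makes it trace class without the
ideal property of `T(H)`. -/

section RankOne

variable {H K : Type*} [NormedAddCommGroup H] [InnerProductSpace ℂ H]
  [NormedAddCommGroup K] [InnerProductSpace ℂ K]

theorem rankOne_apply (u : K) (v x : H) : rankOne u v x = ⟪v, x⟫ • u :=
  rfl

theorem rankOne_comp {E : Type*} [NormedAddCommGroup E] [InnerProductSpace ℂ E] [CompleteSpace E]
    [CompleteSpace H] (u : K) (v : H) (B : E →L[ℂ] H) :
    (rankOne u v).comp B = rankOne u (adjoint B v) :=
  InnerProductSpace.rankOne_comp u v B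

theorem isTraceClass_rankOne (u : K) (v : H) : IsTraceClass (rankOne u v) := by
  refine ⟨‖u‖ * ‖v‖, fun n e f he hf => ?_⟩
  have bessel_u : ∑ i, ‖⟪f i, u⟫‖ ^ 2 ≤ ‖u‖ ^ 2 := hf.sum_inner_products_le u
  have bessel_v : ∑ i, ‖⟪e i, v⟫‖ ^ 2 ≤ ‖v‖ ^ 2 := he.sum_inner_products_le v
  calc ∑ i, ‖⟪f i, rankOne u v (e i)⟫‖
    _ = ∑ i, ‖⟪f i, u⟫‖ * ‖⟪e i, v⟫‖ := by
        simp only [rankOne_apply, inner_smul_right, norm_mul, norm_inner_symm v, mul_comm]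
    _ ≤ √(∑ i, ‖⟪f i, u⟫‖ ^ 2) * √(∑ i, ‖⟪e i, v⟫‖ ^ 2) :=
        Real.sum_mul_le_sqrt_mul_sqrt _ _ _
    _ ≤ ‖u‖ * ‖v‖ := by
        gcongr
        · exact Real.sqrt_le_iff.mpr ⟨norm_nonneg u, bessel_u⟩
        · exact Real.sqrt_le_iff.mpr ⟨norm_nonneg v, bessel_v⟩

theorem isTraceClass_rankOne_comp {E : Type*} [NormedAddCommGroup E] [InnerProductSpace ℂ E]
    [CompleteSpace E] [CompleteSpace H] (u : K) (v : H) (B : E →L[ℂ] H) :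
    IsTraceClass ((rankOne u v).comp B) := by
  rw [rankOne_comp]
  exact isTraceClass_rankOne u _

end RankOne

section Trace

variable {H K : Type*} [NormedAddCommGroup H] [InnerProductSpace ℂ H] [CompleteSpace H]
  [NormedAddCommGroup K] [InnerProductSpace ℂ K] [CompleteSpace K]

theorem tr_rankOne (u v : H) : Tr (rankOne u v) = ⟪v, u⟫ := by
  simp only [Tr, rankOne_apply, inner_smul_right, (stdONB H).tsum_inner_mul_inner]

theorem tr_rankOne_mul (u v : H) (B : H →L[ℂ] H) : Tr (rankOne u v * B) = ⟪v, B u⟫ := by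
  rw [mul_def, rankOne_comp, tr_rankOne, adjoint_inner_left]

theorem eq_of_forall_tr_rankOne_mul_eq {S T : H →L[ℂ] H}
    (h : ∀ u v : H, Tr (rankOne u v * S) = Tr (rankOne u v * T)) : S = T := by
  ext u
  refine ext_inner_left ℂ fun v => ?_
  simpa only [tr_rankOne_mul] using h u v

theorem multiplicative_domain_fixed_by_dual_comp_general
    (Φ : (H →L[ℂ] H) → (K →L[ℂ] K)) (Φs : (K →L[ℂ] K) → (H →L[ℂ] H))
    (htrace : ∀ X : H →L[ℂ] H, IsTraceClass X → Tr (Φ X) = Tr X)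
    (hdual : ∀ (X : H →L[ℂ] H) (Y : K →L[ℂ] K), IsTraceClass X → Tr (Φ X * Y) = Tr (X * Φs Y))
    (A : H →L[ℂ] H) (hmul : ∀ X : H →L[ℂ] H, IsTraceClass X → Φ (X * A) = Φ X * Φ A) :
    Φs (Φ A) = A := by
  refine eq_of_forall_tr_rankOne_mul_eq fun u v => ?_
  have hX : IsTraceClass (rankOne u v) := isTraceClass_rankOne u v
  calc Tr (rankOne u v * Φs (Φ A))
    _ = Tr (Φ (rankOne u v) * Φ A) := (hdual _ _ hX).symm
    _ = Tr (Φ (rankOne u v * A)) := by rw [hmul _ hX]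
    _ = Tr (rankOne u v * A) := htrace _ (isTraceClass_rankOne_comp u v A)

end Trace

/-- If `A` belongs to the multiplicative domain of a quantum channel
`Φ`, then `(Φ* ∘ Φ)(A) = A`, where `Φ*` is the dual map of `Φ`. -/
theorem multiplicative_domain_fixed_by_dual_comp
    {H : Type*} [NormedAddCommGroup H] [InnerProductSpace ℂ H] [CompleteSpace H]
    [TopologicalSpace.SeparableSpace H]
    (Φ : (H →L[ℂ] H) →ₗ[ℂ] (H →L[ℂ] H)) (hΦ : IsChannel Φ)
    (Φs : (H →L[ℂ] H) →ₗ[ℂ] (H →L[ℂ] H))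
    (hdual : ∀ (X Y : H →L[ℂ] H), IsTraceClass X → Tr (Φ X * Y) = Tr (X * Φs Y))
    (A : H →L[ℂ] H) (hAtc : IsTraceClass A)
    (hAmem : ∀ X : H →L[ℂ] H, IsTraceClass X →
      Φ (A * X) = Φ A * Φ X ∧ Φ (X * A) = Φ X * Φ A) :
    Φs (Φ A) = A :=
  multiplicative_domain_fixed_by_dual_comp_general Φ Φs hΦ.tracePreserving hdual A
    fun X hX => (hAmem X hX).2

end
end
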